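/- Let n be a natural number and let M be a nonempty, connected, compact, Hausdorff topological space locally homeomorphic to the euclidean space ℝⁿ (a topological n-manifold). If a countable group G acts effectively (faithfully) by homeomorphisms on M and the orbit space M/G is Hausdorff, then G is finite. -/

import Mathlib

/-!
The heart of the proof is Newman's theorem: a periodic homeomorphism `h` of a connected manifold
that is the identity on a nonempty open set is the identity. It suffices to treat a prime period
`p`. If the theorem failed, inverting in a small sphere would produce a fixed point `b` at which
some linear functional has a strict peak among `b` and the points moved by `h`. Then the average of
`z`, `h z`, ..., `h^[p - 1] z` is close to `b` only for `z` close to `b`, so on a suitable invariant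
neighbourhood of `b` it is homotopic to the identity and has degree `1` over a point near `b`. Being
`h`-invariant, it can be perturbed so that its preimages of that point form free orbits, which makes
the degree a multiple of `p`. The degree is combinatorial: it counts the fully labelled simplices of
a fine Kuhn triangulation, as in Sperner's lemma.

For the group action, orbits are closed since `M / G` is Hausdorff; being countable, compact and
homogeneous, they are finite by Baire's theorem. So every point is fixed by a positive power of `g`,
and by Baire's and Newman's theorems each point has a neighbourhood on which such a power is the
identity. By Newman's theorem again, the fixed set of every `g ≠ 1` has empty interior; by Baire's
theorem some point is then fixed by no `g ≠ 1`, and its finite orbit is a copy of `G`.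
-/

open Equiv Set Filter Topology Metric Function MeasureTheory

section KuhnTriangulation

variable {n : ℕ}

/-- The `k`-th vertex of the Kuhn simplex based at the lattice point `v`: the vertices of the
simplex of `σ` are reached from `v` by raising the coordinates `σ⁻¹ 0, σ⁻¹ 1, …` by one in turn. -/
def kuhnVertex (v : Fin n → ℤ) (σ : Perm (Fin n)) (k : ℕ) : Fin n → ℤ :=
  fun i => v i + if (σ i : ℕ) < k then 1 else 0

/-- The sum of `A`, a function of the list of vertices, over all simplices of the Kuhn
triangulation of `ℝⁿ`, each weighted by its orientation. -/
noncomputable def kuhnSum (A : (Fin (n + 1) → Fin n → ℤ) → ℤ) : ℤ :=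
  ∑ σ : Perm (Fin n), (Perm.sign σ : ℤ) * ∑ᶠ u : Fin n → ℤ, A fun k => kuhnVertex u σ k

@[simp]
theorem kuhnVertex_zero (v : Fin n → ℤ) (σ : Perm (Fin n)) : kuhnVertex v σ 0 = v := by
  funext i
  simp [kuhnVertex]

theorem kuhnVertex_mem_Icc (v : Fin n → ℤ) (σ : Perm (Fin n)) (k : ℕ) :
    kuhnVertex v σ k ∈ Icc v (v + 1) := by
  constructor <;> intro i <;> simp only [kuhnVertex, Pi.add_apply, Pi.one_apply] <;>
    split_ifs <;> omega

theorem kuhnVertex_zero_pos {σ : Perm (Fin n)} {k : ℕ} {i : Fin n} :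
    0 < kuhnVertex 0 σ k i ↔ (σ i : ℕ) < k := by
  simp only [kuhnVertex, Pi.zero_apply, zero_add]
  split_ifs with h <;> simp [h]

theorem kuhnVertex_injective (σ : Perm (Fin n)) (k : ℕ) :
    Injective fun v : Fin n → ℤ => kuhnVertex v σ k :=
  add_left_injective fun i => if (σ i : ℕ) < k then 1 else 0

theorem kuhnVertex_sub_single_one (v : Fin (n + 1) → ℤ) (σ : Perm (Fin (n + 1))) :
    kuhnVertex (v - Pi.single (σ.symm 0) 1) σ 1 = v := by
  funext i
  have : σ i = 0 ↔ i = σ.symm 0 := (σ.eq_symm_apply).symm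
  by_cases hi : i = σ.symm 0 <;>
    simp [kuhnVertex, Fin.val_eq_zero_iff, this, hi]

theorem kuhnVertex_swap_mul (v : Fin (n + 1) → ℤ) (σ : Perm (Fin (n + 1))) (k : Fin n) {m : ℕ}
    (hm : m ≠ k + 1) :
    kuhnVertex v (swap k.castSucc k.succ * σ) m = kuhnVertex v σ m := by
  have key (j : Fin (n + 1)) : (swap k.castSucc k.succ j : ℕ) < m ↔ (j : ℕ) < m := by
    rcases eq_or_ne j k.castSucc with rfl | h
    · simp only [swap_apply_left, Fin.val_succ, Fin.val_castSucc]; omega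
    rcases eq_or_ne j k.succ with rfl | h'
    · simp only [swap_apply_right, Fin.val_succ, Fin.val_castSucc]; omega
    rw [swap_apply_of_ne_of_ne h h']
  funext i
  simp only [kuhnVertex, Perm.mul_apply, key]

theorem sum_sign_mul_interior_face (A : (Fin (n + 1) → Fin (n + 1) → ℤ) → ℤ)
    (v : Fin (n + 1) → ℤ) (i : Fin n) :
    ∑ σ : Perm (Fin (n + 1)), (Perm.sign σ : ℤ) *
      A (fun k => kuhnVertex v σ (i.castSucc.succ.succAbove k : Fin (n + 2))) = 0 := by
  set s : Perm (Fin (n + 1)) := swap i.castSucc i.succ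
  have hs : Perm.sign s = -1 := Perm.sign_swap Fin.castSucc_lt_succ.ne
  have face (σ : Perm (Fin (n + 1))) :
      (fun k => kuhnVertex v (s * σ) (i.castSucc.succ.succAbove k : Fin (n + 2))) =
        fun k => kuhnVertex v σ (i.castSucc.succ.succAbove k : Fin (n + 2)) := by
    funext k
    exact kuhnVertex_swap_mul v σ i fun h => Fin.succAbove_ne i.castSucc.succ k (Fin.ext h)
  have h := Equiv.sum_comp (Equiv.mulLeft s) fun σ : Perm (Fin (n + 1)) => (Perm.sign σ : ℤ) *
    A (fun k => kuhnVertex v σ (i.castSucc.succ.succAbove k : Fin (n + 2)))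
  simp only [coe_mulLeft, face, Perm.sign_mul, hs, Units.val_neg, neg_mul, one_mul,
    Finset.sum_neg_distrib] at h
  linarith

theorem kuhnVertex_eq_kuhnVertex_finRotate (v : Fin (n + 1) → ℤ) (σ : Perm (Fin (n + 1)))
    (k : Fin (n + 1)) :
    kuhnVertex v σ k =
      kuhnVertex (v - Pi.single ((finRotate (n + 1) * σ).symm 0) 1) (finRotate (n + 1) * σ)
        (k + 1) := by
  funext i
  set τ := finRotate (n + 1) * σ
  have hτ : τ i = finRotate (n + 1) (σ i) := rfl
  simp only [kuhnVertex, Pi.sub_apply]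
  by_cases h : σ i = Fin.last n
  · have h0 : τ i = 0 := by rw [hτ, h, finRotate_last]
    have hi : i = τ.symm 0 := by rw [← h0, symm_apply_apply]
    rw [← hi, h0, h]
    simp [show ¬ n < (k : ℕ) by omega]
  · have hv : (τ i : ℕ) = σ i + 1 := coe_finRotate_of_ne_last h
    have hi : i ≠ τ.symm 0 := fun h' => by
      rw [(τ.eq_symm_apply).mp h'] at hv
      simp at hv
    rw [Pi.single_eq_of_ne hi, hv]
    simp

theorem sum_sign_mul_last_face (A : (Fin (n + 1) → Fin (n + 1) → ℤ) → ℤ) (v : Fin (n + 1) → ℤ) :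
    ∑ σ : Perm (Fin (n + 1)), (Perm.sign σ : ℤ) * A (fun k => kuhnVertex v σ k) =
      (-1) ^ n * ∑ σ : Perm (Fin (n + 1)), (Perm.sign σ : ℤ) *
        A (fun k => kuhnVertex (v - Pi.single (σ.symm 0) 1) σ (k + 1)) := by
  rw [Finset.mul_sum]
  refine Eq.trans (Finset.sum_congr rfl fun σ _ => ?_)
    (Equiv.sum_comp (Equiv.mulLeft (finRotate (n + 1))) _)
  have hsq : (-1 : ℤ) ^ n * (-1) ^ n = 1 := by rw [← mul_pow]; simp
  simp only [kuhnVertex_eq_kuhnVertex_finRotate v σ, coe_mulLeft, Perm.sign_mul, sign_finRotate]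
  push_cast
  rw [mul_assoc, ← mul_assoc, hsq, one_mul]

/-- The interior faces of the simplices of a cube cancel in pairs, and a last face is the zeroth
face of a simplex of a neighbouring cube. -/
theorem sum_sign_mul_zero_face_sub (A : (Fin (n + 1) → Fin (n + 1) → ℤ) → ℤ) (v : Fin (n + 1) → ℤ)
    (hA : ∀ σ : Perm (Fin (n + 1)), ∑ i : Fin (n + 2), (-1) ^ (i : ℕ) *
      A (fun k => kuhnVertex v σ (i.succAbove k : Fin (n + 2))) = 0) :
    ∑ σ : Perm (Fin (n + 1)), (Perm.sign σ : ℤ) * (A (fun k => kuhnVertex v σ (k + 1)) -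
      A (fun k => kuhnVertex (v - Pi.single (σ.symm 0) 1) σ (k + 1))) = 0 := by
  have h : ∑ σ : Perm (Fin (n + 1)), (Perm.sign σ : ℤ) * ∑ i : Fin (n + 2), (-1) ^ (i : ℕ) *
      A (fun k => kuhnVertex v σ (i.succAbove k : Fin (n + 2))) = 0 :=
    Finset.sum_eq_zero fun σ _ => by rw [hA, mul_zero]
  simp_rw [Finset.mul_sum, mul_left_comm _ ((-1 : ℤ) ^ _)] at h
  rw [Finset.sum_comm] at h
  simp_rw [← Finset.mul_sum] at h
  have hsign : (-1 : ℤ) ^ (n + 1) * (-1) ^ n = -1 := by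
    rw [← pow_add]; exact Odd.neg_one_pow ⟨n, by ring⟩
  rw [Fin.sum_univ_succ, Fin.sum_univ_castSucc] at h
  simp only [sum_sign_mul_interior_face, mul_zero, Finset.sum_const_zero, zero_add, Fin.val_zero,
    pow_zero, one_mul, Fin.zero_succAbove, Fin.succ_last, Fin.succAbove_last, Fin.val_last,
    Fin.val_succ, Fin.val_castSucc, sum_sign_mul_last_face, ← mul_assoc, hsign] at h
  simp only [mul_sub, Finset.sum_sub_distrib]
  linarith

theorem kuhnVertex_cons_decomposeFin (τ : ℤ) (u : Fin n → ℤ) (e : Perm (Fin n)) (k : ℕ) :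
    kuhnVertex (Fin.cons τ u : Fin (n + 1) → ℤ) (Perm.decomposeFin.symm (0, e)) (k + 1) =
      Fin.cons (τ + 1) (kuhnVertex u e k) := by
  funext i
  cases i using Fin.cases <;> simp [kuhnVertex]

theorem cons_sub_single_zero (τ : ℤ) (u : Fin n → ℤ) :
    (Fin.cons τ u : Fin (n + 1) → ℤ) - Pi.single 0 1 = Fin.cons (τ - 1) u := by
  funext i
  cases i using Fin.cases <;> simp

theorem cons_sub_single_succ (τ : ℤ) (u : Fin n → ℤ) (j : Fin n) :
    (Fin.cons τ u : Fin (n + 1) → ℤ) - Pi.single j.succ 1 =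
      Fin.cons τ (u - Pi.single j 1 : Fin n → ℤ) := by
  funext i
  cases i using Fin.cases <;> simp [Pi.single_apply]

theorem finsum_cons_sub_finsum_cons_sub_single {σ : Perm (Fin (n + 1))} (hσ : σ 0 ≠ 0) (τ : ℤ)
    (f : (Fin (n + 1) → ℤ) → ℤ) :
    ∑ᶠ u : Fin n → ℤ, f (Fin.cons τ u) -
      ∑ᶠ u : Fin n → ℤ, f ((Fin.cons τ u : Fin (n + 1) → ℤ) - Pi.single (σ.symm 0) 1) = 0 := by
  obtain ⟨j, hj⟩ := Fin.exists_succ_eq.mpr fun h : σ.symm 0 = 0 => hσ (σ.symm_apply_eq.mp h).symm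
  simp_rw [← hj, cons_sub_single_succ]
  rw [sub_eq_zero, ← finsum_comp_equiv (Equiv.subRight (Pi.single j 1))]
  rfl

/-- Over a slab, the walls of the prisms cancel and the top and the bottom remain. -/
theorem kuhnSum_cons_succ_eq (τ : ℤ) (A : (Fin (n + 1) → Fin (n + 1) → ℤ) → ℤ)
    (hA : ∀ (u : Fin n → ℤ) (σ : Perm (Fin (n + 1))), ∑ i : Fin (n + 2), (-1) ^ (i : ℕ) *
      A (fun k => kuhnVertex (Fin.cons τ u) σ (i.succAbove k : Fin (n + 2))) = 0)
    (hfin : {v | v 0 ∈ Icc τ (τ + 1) ∧ ∃ w, w 0 = v ∧ A w ≠ 0}.Finite) :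
    kuhnSum (fun w => A fun k => Fin.cons (τ + 1) (w k)) =
      kuhnSum (fun w => A fun k => Fin.cons τ (w k)) := by
  set f : Perm (Fin (n + 1)) → (Fin (n + 1) → ℤ) → ℤ :=
    fun σ v => A fun k => kuhnVertex v σ (k + 1) with hf
  have hcons : Injective fun u : Fin n → ℤ => (Fin.cons τ u : Fin (n + 1) → ℤ) :=
    Fin.cons_right_injective (α := fun _ => ℤ) τ
  have hupper (σ) : (support fun u : Fin n → ℤ => f σ (Fin.cons τ u)).Finite :=
    (hfin.preimage ((kuhnVertex_injective σ 1).comp hcons).injOn).subset fun u hu =>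
      ⟨⟨(kuhnVertex_mem_Icc _ σ 1).1 0, (kuhnVertex_mem_Icc _ σ 1).2 0⟩, _, by simp, hu⟩
  have hlower (σ) : (support fun u : Fin n → ℤ =>
      f σ ((Fin.cons τ u : Fin (n + 1) → ℤ) - Pi.single (σ.symm 0) 1)).Finite :=
    (hfin.preimage hcons.injOn).subset fun u hu =>
      ⟨by simp, _, by simp [kuhnVertex_sub_single_one], hu⟩
  have htotal : ∑ σ : Perm (Fin (n + 1)), (Perm.sign σ : ℤ) *
      (∑ᶠ u : Fin n → ℤ, f σ (Fin.cons τ u) - ∑ᶠ u : Fin n → ℤ,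
        f σ ((Fin.cons τ u : Fin (n + 1) → ℤ) - Pi.single (σ.symm 0) 1)) = 0 := by
    simp_rw [← finsum_sub_distrib (hupper _) (hlower _), mul_finsum]
    rw [← finsum_sum_comm _ _ fun σ _ => ?_]
    · simp only [hf, sum_sign_mul_zero_face_sub A _ (hA _), finsum_zero]
    · exact ((hupper σ).union (hlower σ)).subset ((support_mul_subset_right _ _).trans
        (support_sub _ _))
  rw [← Equiv.sum_comp Perm.decomposeFin.symm, Fintype.sum_prod_type,
    Finset.sum_eq_single_of_mem 0 (Finset.mem_univ _) fun i _ hi => Finset.sum_eq_zero fun e _ => by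
      rw [finsum_cons_sub_finsum_cons_sub_single (by simpa using hi), mul_zero]] at htotal
  have hzero (e : Perm (Fin n)) : (Perm.decomposeFin.symm (0, e)).symm 0 = 0 := by
    rw [Equiv.symm_apply_eq]; simp
  simp only [hf, hzero, cons_sub_single_zero, kuhnVertex_cons_decomposeFin, sub_add_cancel,
    Perm.decomposeFin.symm_sign, if_true, one_mul, mul_sub, Finset.sum_sub_distrib] at htotal
  exact sub_eq_zero.mp htotal

end KuhnTriangulation

section LabelCount

variable {n : ℕ}

/-- The orientation with which the labels `l` of the vertices of an `n`-simplex cover the standard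
simplex: the sign of `l` if `l` is a permutation, and `0` otherwise. -/
def labelSign (l : Fin (n + 1) → Fin (n + 1)) : ℤ :=
  Matrix.det (Matrix.of fun i j => if l j = i then 1 else 0)

theorem labelSign_eq_zero {l : Fin (n + 1) → Fin (n + 1)} {i : Fin (n + 1)} (h : ∀ k, l k ≠ i) :
    labelSign l = 0 :=
  Matrix.det_eq_zero_of_row_eq_zero i fun j => by simp [h j]

@[simp]
theorem labelSign_id : labelSign (id : Fin (n + 1) → Fin (n + 1)) = 1 := by
  rw [labelSign, ← Matrix.det_one (n := Fin (n + 1))]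
  congr 1
  ext i j
  simp [Matrix.one_apply, eq_comm]

/-- The rows of the matrix of `l` sum to the constant row `1`, so bordering that matrix by a row of
ones makes it singular. -/
theorem sum_labelSign_face (l : Fin (n + 2) → Fin (n + 1)) :
    ∑ i : Fin (n + 2), (-1) ^ (i : ℕ) * labelSign (fun k => l (i.succAbove k)) = 0 := by
  let N : Matrix (Fin (n + 2)) (Fin (n + 2)) ℤ :=
    Matrix.of (Fin.cons 1 fun i j => if l j = i then 1 else 0)
  have hN : N.det = 0 := by
    refine Matrix.exists_vecMul_eq_zero_iff.mp
      ⟨Fin.cons 1 fun _ => -1, fun h => by simpa using congrFun h 0, ?_⟩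
    ext j
    simp [Matrix.vecMul, dotProduct, Fin.sum_univ_succ, N]
  rw [← hN, Matrix.det_succ_row_zero]
  refine Finset.sum_congr rfl fun i _ => ?_
  simp only [N, Matrix.of_apply, Fin.cons_zero, Pi.one_apply, mul_one]
  rfl

/-- The number of fully labelled Kuhn simplices, counted with orientation and with the weight `e`
of their first vertex. -/
noncomputable def labelCount (lab : (Fin n → ℤ) → Fin (n + 1)) (e : (Fin n → ℤ) → ℤ) : ℤ :=
  kuhnSum fun w => e (w 0) * labelSign (lab ∘ w)

theorem labelCount_cons_succ_eq (τ : ℤ) (lab : (Fin (n + 1) → ℤ) → Fin (n + 1))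
    (e : (Fin (n + 1) → ℤ) → ℤ) (hfin : {v | v 0 ∈ Icc τ (τ + 1) ∧ e v ≠ 0}.Finite)
    (hcell : ∀ v : Fin (n + 1) → ℤ, v 0 = τ →
      (∀ w ∈ Icc v (v + 1), e w = e v) ∨ ∃ l, ∀ w ∈ Icc v (v + 1), lab w ≠ l) :
    labelCount (fun u => lab (Fin.cons (τ + 1) u)) (fun u => e (Fin.cons (τ + 1) u)) =
      labelCount (fun u => lab (Fin.cons τ u)) (fun u => e (Fin.cons τ u)) := by
  refine kuhnSum_cons_succ_eq τ (fun w => e (w 0) * labelSign (lab ∘ w)) (fun u σ => ?_)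
    (hfin.subset ?_)
  · rcases hcell (Fin.cons τ u) (Fin.cons_zero _ _) with he | ⟨l, hl⟩
    · simp_rw [he _ (kuhnVertex_mem_Icc _ σ _), mul_left_comm _ (e _), ← Finset.mul_sum]
      exact mul_eq_zero_of_right _
        (sum_labelSign_face fun k : Fin (n + 2) => lab (kuhnVertex (Fin.cons τ u) σ k))
    · exact Finset.sum_eq_zero fun i _ => mul_eq_zero_of_right _ <| mul_eq_zero_of_right _ <|
        labelSign_eq_zero fun k => hl _ (kuhnVertex_mem_Icc _ σ _)
  · rintro v ⟨hv, w, rfl, hw⟩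
    exact ⟨hv, left_ne_zero_of_mul hw⟩

theorem labelCount_finset_sum {ι : Type*} (t : Finset ι) (lab : (Fin n → ℤ) → Fin (n + 1))
    (e : ι → (Fin n → ℤ) → ℤ) (hfin : ∀ i ∈ t, (support (e i)).Finite) :
    labelCount lab (fun u => ∑ i ∈ t, e i u) = ∑ i ∈ t, labelCount lab (e i) := by
  simp only [labelCount, kuhnSum, Finset.sum_mul]
  rw [Finset.sum_comm]
  refine Finset.sum_congr rfl fun σ _ => ?_
  rw [finsum_sum_comm _ _ fun i hi => ?_, Finset.mul_sum]
  refine (hfin i hi).subset fun u hu => ?_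
  simpa using left_ne_zero_of_mul hu

end LabelCount

section SpernerLabel

variable {n : ℕ}

/-- The last positive coordinate of `y`, coordinates being counted from `1`, or `0` if there is
none. It labels the vertices of a triangulation in such a way that a simplex carrying all labels
lies close to a zero of `y`. -/
noncomputable def spernerLabel {α : Type*} [Zero α] [LinearOrder α] (y : Fin n → α) : Fin (n + 1) :=
  Finset.univ.sup fun i => if 0 < y i then i.succ else 0

section LinearOrder

variable {α : Type*} [Zero α] [LinearOrder α] {y y' : Fin n → α} {i : Fin n}

theorem succ_le_spernerLabel (h : 0 < y i) : i.succ ≤ spernerLabel y :=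
  (if_pos h).ge.trans
    (Finset.le_sup (f := fun i => if 0 < y i then i.succ else 0) (Finset.mem_univ i))

theorem spernerLabel_le {l : Fin (n + 1)} (h : ∀ i, 0 < y i → i.succ ≤ l) : spernerLabel y ≤ l :=
  Finset.sup_le fun i _ => by
    split_ifs with hi
    exacts [h i hi, Fin.zero_le l]

theorem nonpos_of_spernerLabel_eq_zero (h : spernerLabel y = 0) (i : Fin n) : y i ≤ 0 :=
  not_lt.mp fun hi => (Fin.succ_pos i).not_ge (h ▸ succ_le_spernerLabel hi)

theorem pos_of_spernerLabel_eq_succ (h : spernerLabel y = i.succ) : 0 < y i := by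
  obtain ⟨j, -, hj⟩ := Finset.exists_mem_eq_sup Finset.univ ⟨i, Finset.mem_univ i⟩
    fun i => if 0 < y i then i.succ else 0
  have hj' : i.succ = if 0 < y j then j.succ else 0 := h.symm.trans hj
  split_ifs at hj' with hpos
  · exact Fin.succ_injective _ hj' ▸ hpos
  · exact absurd hj' (Fin.succ_ne_zero i)

theorem exists_eventually_spernerLabel_ne [TopologicalSpace α] [OrderClosedTopology α]
    (h : y ≠ 0) : ∃ l, ∀ᶠ y' in 𝓝 y, spernerLabel y' ≠ l := by
  obtain ⟨i, hi⟩ := ne_iff.mp h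
  have hlim : Tendsto (fun y' : Fin n → α => y' i) (𝓝 y) (𝓝 (y i)) := (continuous_apply i).tendsto y
  rcases lt_or_gt_of_ne hi with hneg | hpos
  · exact ⟨i.succ, (hlim.eventually_lt_const hneg).mono fun y' hy' hl =>
      (pos_of_spernerLabel_eq_succ hl).not_gt hy'⟩
  · exact ⟨0, (hlim.eventually_const_lt hpos).mono fun y' hy' hl =>
      (nonpos_of_spernerLabel_eq_zero hl i).not_gt hy'⟩

end LinearOrder

theorem spernerLabel_smul_intCast {ε : ℝ} (hε : 0 < ε) (u : Fin n → ℤ) :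
    spernerLabel (ε • fun i => (u i : ℝ)) = spernerLabel u := by
  simp [spernerLabel, hε, mul_pos_iff_of_pos_left]

theorem spernerLabel_kuhnVertex_zero_one (k : Fin (n + 1)) :
    spernerLabel (kuhnVertex (0 : Fin n → ℤ) 1 k) = k := by
  have hpos (i : Fin n) : 0 < kuhnVertex (0 : Fin n → ℤ) 1 k i ↔ i.succ ≤ k := by
    rw [kuhnVertex_zero_pos, Perm.one_apply, Fin.le_def, Fin.val_succ, Nat.succ_le_iff]
  refine le_antisymm (spernerLabel_le fun i hi => (hpos i).mp hi) ?_
  cases k using Fin.cases with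
  | zero => exact Fin.zero_le _
  | succ j => exact succ_le_spernerLabel ((hpos j).mpr le_rfl)

theorem eq_zero_and_eq_one_of_surjective_spernerLabel {u : Fin n → ℤ} {σ : Perm (Fin n)}
    (h : Surjective fun k : Fin (n + 1) => spernerLabel (kuhnVertex u σ k)) :
    u = 0 ∧ σ = 1 := by
  have hu : u = 0 := by
    funext i
    obtain ⟨k₀, hk₀⟩ := h 0
    obtain ⟨k, hk⟩ := h i.succ
    have hle := (kuhnVertex_mem_Icc u σ k₀).1 i |>.trans (nonpos_of_spernerLabel_eq_zero hk₀ i)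
    have hlt := (pos_of_spernerLabel_eq_succ hk).trans_le ((kuhnVertex_mem_Icc u σ k).2 i)
    simp only [Pi.add_apply, Pi.one_apply] at hlt
    exact le_antisymm hle (Int.lt_add_one_iff.mp hlt)
  subst hu
  have hmono : Monotone fun k : Fin (n + 1) => spernerLabel (kuhnVertex 0 σ k) := fun k k' hk =>
    spernerLabel_le fun i hi => succ_le_spernerLabel <|
      kuhnVertex_zero_pos.mpr ((kuhnVertex_zero_pos.mp hi).trans_le hk)
  have hid : (fun k : Fin (n + 1) => spernerLabel (kuhnVertex 0 σ k)) = id :=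
    (hmono.strictMono_of_injective (Finite.injective_iff_surjective.mpr h)).eq_id
  refine ⟨rfl, Equiv.ext fun i => le_antisymm ?_ ?_⟩
  · exact Nat.lt_succ_iff.mp (kuhnVertex_zero_pos.mp
      (pos_of_spernerLabel_eq_succ (congrFun hid i.succ)))
  · have hle := succ_le_spernerLabel (kuhnVertex_zero_pos.mpr (Nat.lt_succ_self (σ i : ℕ)))
    exact Fin.succ_le_succ_iff.mp (hle.trans (congrFun hid (σ i).succ).le)

theorem labelCount_spernerLabel (e : (Fin n → ℤ) → ℤ) : labelCount spernerLabel e = e 0 := by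
  have hzero {u : Fin n → ℤ} {σ : Perm (Fin n)} (h : ¬ (u = 0 ∧ σ = 1)) :
      e (kuhnVertex u σ 0) *
        labelSign (spernerLabel ∘ fun k : Fin (n + 1) => kuhnVertex u σ k) = 0 := by
    refine mul_eq_zero_of_right _ (by_contra fun hne => h ?_)
    refine eq_zero_and_eq_one_of_surjective_spernerLabel fun l => ?_
    by_contra! hl
    exact hne (labelSign_eq_zero hl)
  have hid : (spernerLabel ∘ fun k : Fin (n + 1) => kuhnVertex (0 : Fin n → ℤ) 1 k) = id :=
    funext spernerLabel_kuhnVertex_zero_one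
  calc labelCount spernerLabel e
    _ = ∑ᶠ u : Fin n → ℤ, e (kuhnVertex u 1 0) *
          labelSign (spernerLabel ∘ fun k : Fin (n + 1) => kuhnVertex u 1 k) := by
      refine (Finset.sum_eq_single_of_mem 1 (Finset.mem_univ _) fun σ _ hσ => ?_).trans (by simp)
      exact mul_eq_zero_of_right _ (finsum_eq_zero_of_forall_eq_zero fun u => hzero fun h => hσ h.2)
    _ = e 0 := by
      rw [finsum_eq_single _ 0 fun u hu => hzero fun h => hu h.1]
      simp [hid]

end SpernerLabel

section LatticeDegree

variable {n : ℕ}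

/-- The point with integer coordinates `u` of the lattice of mesh `ε` based at `q`. -/
def latticePoint (q : Fin n → ℝ) (ε : ℝ) (u : Fin n → ℤ) : Fin n → ℝ :=
  q + ε • fun i => (u i : ℝ)

/-- The combinatorial degree of `F` over `q` on the set `A`: the fully labelled simplices of the
Kuhn triangulation of mesh `ε` with first vertex in `A` are counted with orientation. -/
noncomputable def latticeDegree (q : Fin n → ℝ) (ε : ℝ) (F : (Fin n → ℝ) → Fin n → ℝ)
    (A : Set (Fin n → ℝ)) : ℤ :=
  labelCount (fun u => spernerLabel (F (latticePoint q ε u) - q))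
    fun u => A.indicator 1 (latticePoint q ε u)

theorem dist_latticePoint_le (q : Fin n → ℝ) {ε : ℝ} (hε : 0 ≤ ε) {u u' : Fin n → ℤ}
    (h : ∀ i, |u i - u' i| ≤ 1) : dist (latticePoint q ε u) (latticePoint q ε u') ≤ ε := by
  refine (dist_pi_le_iff hε).mpr fun i => ?_
  have hi : |(u i : ℝ) - u' i| ≤ 1 := mod_cast h i
  simpa [latticePoint, Real.dist_eq, ← mul_sub, abs_mul, abs_of_nonneg hε]
    using mul_le_mul_of_nonneg_left hi hε

theorem finite_setOf_latticePoint_mem (q : Fin n → ℝ) {ε : ℝ} (hε : 0 < ε) {C : Set (Fin n → ℝ)}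
    (hC : Bornology.IsBounded C) : {u | latticePoint q ε u ∈ C}.Finite := by
  obtain ⟨⟨a, ha⟩, ⟨b, hb⟩⟩ := isBounded_iff_bddBelow_bddAbove.mp hC
  refine (finite_Icc (fun i => ⌈(a i - q i) / ε⌉) fun i => ⌊(b i - q i) / ε⌋).subset fun u hu =>
    ⟨fun i => ?_, fun i => ?_⟩
  · have : a i ≤ q i + ε * u i := ha hu i
    rw [Int.ceil_le, div_le_iff₀ hε]
    linarith
  · have : q i + ε * u i ≤ b i := hb hu i
    rw [Int.le_floor, le_div_iff₀ hε]
    linarith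

theorem latticeDegree_id (q : Fin n → ℝ) {ε : ℝ} (hε : 0 < ε) {A : Set (Fin n → ℝ)} (hq : q ∈ A) :
    latticeDegree q ε id A = 1 := by
  have hlab : (fun u : Fin n → ℤ => spernerLabel (id (latticePoint q ε u) - q)) = spernerLabel := by
    funext u
    rw [id, latticePoint, add_sub_cancel_left, spernerLabel_smul_intCast hε]
  have hzero : latticePoint q ε 0 = q := by
    funext i
    simp [latticePoint]
  rw [latticeDegree, hlab, labelCount_spernerLabel, hzero, indicator_of_mem hq, Pi.one_apply]

theorem latticeDegree_biUnion {ι : Type*} (t : Finset ι) (q : Fin n → ℝ) {ε : ℝ} (hε : 0 < ε)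
    (F : (Fin n → ℝ) → Fin n → ℝ) {A : ι → Set (Fin n → ℝ)}
    (hA : ∀ i ∈ t, Bornology.IsBounded (A i)) (hdisj : (t : Set ι).PairwiseDisjoint A) :
    latticeDegree q ε F (⋃ i ∈ t, A i) = ∑ i ∈ t, latticeDegree q ε F (A i) := by
  simp only [latticeDegree, Finset.indicator_biUnion t A hdisj]
  refine labelCount_finset_sum t _ _ fun i hi =>
    (finite_setOf_latticePoint_mem q hε (hA i hi)).subset fun u hu => ?_
  exact mem_of_indicator_ne_zero (s := A i) hu

theorem exists_forall_ball_of_isCompact {X : Type*} [PseudoMetricSpace X] {K : Set X}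
    (hK : IsCompact K) {P : Set X → Prop} (hmono : ∀ s t, s ⊆ t → P t → P s)
    (hP : ∀ x ∈ K, ∃ s ∈ 𝓝 x, P s) : ∃ δ > 0, ∀ x ∈ K, P (ball x δ) := by
  choose! c hc hPc using hP
  obtain ⟨δ, hδ, hsub⟩ := lebesgue_number_lemma_of_metric hK
    (c := fun x : K => interior (c x)) (fun _ => isOpen_interior)
    fun x hx => mem_iUnion.mpr ⟨⟨x, hx⟩, mem_interior_iff_mem_nhds.mpr (hc x hx)⟩
  refine ⟨δ, hδ, fun x hx => ?_⟩
  obtain ⟨y, hy⟩ := hsub x hx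
  exact hmono _ _ (hy.trans interior_subset) (hPc y y.2)

theorem latticeDegree_add_eq {q : Fin n → ℝ} {F : ℝ × (Fin n → ℝ) → Fin n → ℝ}
    {S : Set (ℝ × (Fin n → ℝ))} {C : Set (Fin n → ℝ)} {s η ε δ : ℝ} (hη : 0 ≤ η) (hηδ : η < δ)
    (hε : 0 < ε) (hεδ : ε < δ) (hC : Bornology.IsBounded C) (hSC : ∀ z ∈ S, z.2 ∈ C)
    (hcell : ∀ z ∈ Icc s (s + η) ×ˢ C, (∃ m : Prop, ∀ z' ∈ ball z δ, (z' ∈ S ↔ m)) ∨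
      ∃ l, ∀ z' ∈ ball z δ, spernerLabel (F z' - q) ≠ l) :
    latticeDegree q ε (fun x => F (s + η, x)) {x | (s + η, x) ∈ S} =
      latticeDegree q ε (fun x => F (s, x)) {x | (s, x) ∈ S} := by
  let P (v : Fin (n + 1) → ℤ) : ℝ × (Fin n → ℝ) := (s + v 0 * η, latticePoint q ε (Fin.tail v))
  have hP (τ : ℤ) (u : Fin n → ℤ) : P (Fin.cons τ u) = (s + τ * η, latticePoint q ε u) := rfl
  have hdist {v w w' : Fin (n + 1) → ℤ} (hw : w ∈ Icc v (v + 1)) (hw' : w' ∈ Icc v (v + 1)) :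
      dist (P w) (P w') < δ := by
    have habs (i) : |w i - w' i| ≤ 1 := by
      have := hw.1 i; have := hw.2 i; have := hw'.1 i; have := hw'.2 i
      simp only [Pi.add_apply, Pi.one_apply] at *
      rw [abs_le]; omega
    have h0 : |(w 0 : ℝ) - w' 0| ≤ 1 := mod_cast habs 0
    refine max_lt ?_ ((dist_latticePoint_le q hε.le fun i => habs i.succ).trans_lt hεδ)
    rw [Real.dist_eq, add_sub_add_left_eq_sub, ← sub_mul, abs_mul, abs_of_nonneg hη]
    exact (mul_le_of_le_one_left hη h0).trans_lt hηδ
  have hstep := labelCount_cons_succ_eq 0 (fun v => spernerLabel (F (P v) - q))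
    (fun v => S.indicator 1 (P v)) ?_ fun v hv => ?_
  · simp only [hP, zero_add, Int.cast_one, one_mul, Int.cast_zero, zero_mul, add_zero] at hstep
    exact hstep
  · refine ((finite_Icc (0 : ℤ) (0 + 1)).image2 Fin.cons
      (finite_setOf_latticePoint_mem q hε hC)).subset fun v hv => ?_
    exact ⟨v 0, hv.1, Fin.tail v, hSC _ (mem_of_indicator_ne_zero hv.2), Fin.cons_self_tail v⟩
  · have hvv : v ∈ Icc v (v + 1) := ⟨le_rfl, le_add_of_nonneg_right zero_le_one⟩
    by_cases hw : ∃ w ∈ Icc v (v + 1), P w ∈ S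
    · obtain ⟨w, hw, hwS⟩ := hw
      have htime : (P w).1 ∈ Icc s (s + η) := by
        have h1 : (0 : ℝ) ≤ w 0 := mod_cast hv ▸ hw.1 0
        have h2 : w 0 ≤ 1 := (hw.2 0).trans_eq (by simp [hv])
        have h2' : (w 0 : ℝ) ≤ 1 := mod_cast h2
        constructor <;> simp only [P] <;> nlinarith
      refine (hcell (P w) ⟨htime, hSC _ hwS⟩).imp ?_ ?_
      · rintro ⟨m, hm⟩ w' hw'
        have hiff : P w' ∈ S ↔ P v ∈ S := (hm _ (hdist hw' hw)).trans (hm _ (hdist hvv hw)).symm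
        by_cases h : P v ∈ S <;> simp [hiff, h]
      · rintro ⟨l, hl⟩
        exact ⟨l, fun w' hw' => hl _ (hdist hw' hw)⟩
    · push Not at hw
      refine Or.inl fun w' hw' => ?_
      rw [indicator_of_notMem (hw _ hw'), indicator_of_notMem (hw _ hvv)]

/-- Homotopy invariance; the set on which simplices are counted may vary with time as long as it
does not change at points where `F = q`. -/
theorem eventually_latticeDegree_eq {q : Fin n → ℝ} {F : ℝ × (Fin n → ℝ) → Fin n → ℝ}
    {S : Set (ℝ × (Fin n → ℝ))} {C : Set (Fin n → ℝ)} (hC : IsCompact C)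
    (hSC : ∀ z ∈ S, z.2 ∈ C) (hF : ∀ z ∈ Icc 0 1 ×ˢ C, ContinuousAt F z)
    (hS : ∀ z ∈ Icc 0 1 ×ˢ C, F z = q → ∀ᶠ z' in 𝓝 z, (z' ∈ S ↔ z ∈ S)) :
    ∀ᶠ ε in 𝓝[>] (0 : ℝ), latticeDegree q ε (fun x => F (1, x)) {x | (1, x) ∈ S} =
      latticeDegree q ε (fun x => F (0, x)) {x | (0, x) ∈ S} := by
  obtain ⟨δ, hδ, hcell⟩ := exists_forall_ball_of_isCompact (isCompact_Icc.prod hC)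
    (P := fun s => (∃ m : Prop, ∀ z ∈ s, (z ∈ S ↔ m)) ∨ ∃ l, ∀ z ∈ s, spernerLabel (F z - q) ≠ l)
    (fun s t hst => Or.imp (fun ⟨m, hm⟩ => ⟨m, fun z hz => hm z (hst hz)⟩)
      fun ⟨l, hl⟩ => ⟨l, fun z hz => hl z (hst hz)⟩)
    fun z hz => by
      by_cases hq : F z = q
      · exact ⟨_, hS z hz hq, Or.inl ⟨z ∈ S, fun _ => id⟩⟩
      · obtain ⟨l, hl⟩ := exists_eventually_spernerLabel_ne (sub_ne_zero.mpr hq)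
        exact ⟨_, ((hF z hz).sub continuousAt_const).eventually hl, Or.inr ⟨l, fun _ => id⟩⟩
  obtain ⟨N, hN⟩ := exists_nat_one_div_lt hδ
  have hN0 : (0 : ℝ) < N + 1 := N.cast_add_one_pos
  filter_upwards [Ioo_mem_nhdsGT hδ] with ε ⟨hε, hεδ⟩
  have hsteps : ∀ τ : ℕ, τ ≤ N + 1 →
      latticeDegree q ε (fun x => F ((τ : ℝ) * (1 / (N + 1)), x))
        {x | ((τ : ℝ) * (1 / (N + 1)), x) ∈ S} =
        latticeDegree q ε (fun x => F (0, x)) {x | (0, x) ∈ S} := by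
    intro τ hτ
    induction τ with
    | zero => simp
    | succ τ ih =>
      have hle : (τ : ℝ) * (1 / (N + 1)) + 1 / (N + 1) ≤ 1 := by
        rw [← add_one_mul, mul_one_div, div_le_one hN0]
        exact_mod_cast hτ
      rw [← ih (by omega), Nat.cast_succ, add_one_mul]
      exact latticeDegree_add_eq (by positivity) hN hε hεδ hC.isBounded hSC fun z hz =>
        hcell z ⟨⟨le_trans (by positivity) hz.1.1, hz.1.2.trans hle⟩, hz.2⟩
  simpa [hN0.ne'] using hsteps (N + 1) le_rfl

end LatticeDegree

section PeriodicOn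

variable {X : Type*} {h : X → X} {p : ℕ}

/-- A slice for the `ℤ / p`-action generated by `h`: a set of `p`-periodic points disjoint from its
`p - 1` nontrivial translates. -/
structure IsSlice (h : X → X) (p : ℕ) (S : Set X) : Prop where
  isPeriodicPt : ∀ y ∈ S, IsPeriodicPt h p y
  iterate_notMem : ∀ y ∈ S, ∀ i, 0 < i → i < p → h^[i] y ∉ S

theorem IsSlice.mono {S T : Set X} (hT : IsSlice h p T) (hST : S ⊆ T) : IsSlice h p S where
  isPeriodicPt y hy := hT.isPeriodicPt y (hST hy)
  iterate_notMem y hy i hi hip hmem := hT.iterate_notMem y (hST hy) i hi hip (hST hmem)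

theorem IsSlice.union_diff_saturation {D B : Set X} (hD : IsSlice h p D) (hB : IsSlice h p B) :
    IsSlice h p (D ∪ B \ {y | ∃ i < p, h^[i] y ∈ D}) where
  isPeriodicPt y hy := hy.elim (hD.isPeriodicPt y) fun hy => hB.isPeriodicPt y hy.1
  iterate_notMem := by
    rintro y (hy | ⟨hyB, hyD⟩) i hi hip (hmem | ⟨hmemB, hmemD⟩)
    · exact hD.iterate_notMem y hy i hi hip hmem
    · refine hmemD ⟨p - i, by omega, ?_⟩
      rwa [← iterate_add_apply, Nat.sub_add_cancel hip.le, hD.isPeriodicPt y hy]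
    · exact hyD ⟨i, hip, hmem⟩
    · exact hB.iterate_notMem y hyB i hi hip hmemB

variable [TopologicalSpace X] {V : Set X}

/-- `PeriodicOn h p V` says that `h` restricts to a continuous self-map of the open set `V` whose
`p`-th iterate is the identity of `V`; for `0 < p` this restriction is a periodic homeomorphism.
Nothing is assumed about `h` outside `V`. -/
structure PeriodicOn (h : X → X) (p : ℕ) (V : Set X) : Prop where
  isOpen : IsOpen V
  mapsTo : MapsTo h V V
  continuousOn : ContinuousOn h V
  isPeriodicPt : ∀ z ∈ V, IsPeriodicPt h p z

namespace PeriodicOn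

theorem continuousAt_iterate (H : PeriodicOn h p V) {z : X} (hz : z ∈ V) (i : ℕ) :
    ContinuousAt h^[i] z :=
  (H.continuousOn.iterate H.mapsTo i).continuousAt (H.isOpen.mem_nhds hz)

theorem continuousAt (H : PeriodicOn h p V) {z : X} (hz : z ∈ V) : ContinuousAt h z :=
  H.continuousAt_iterate hz 1

theorem mem_of_iterate_mem (H : PeriodicOn h p V) (hp : 0 < p) {S : Set X} (hS : MapsTo h S S)
    {z : X} (hz : z ∈ V) {i : ℕ} (hi : h^[i] z ∈ S) : z ∈ S := by
  have hz' : h^[p * i] z = z := (H.isPeriodicPt z hz).mul_const i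
  have hmem := hS.iterate (p * i - i) hi
  rwa [← iterate_add_apply, Nat.sub_add_cancel (Nat.le_mul_of_pos_left i hp), hz'] at hmem

theorem isFixedPt_of_iterate (H : PeriodicOn h p V) (hp : 0 < p) {z : X} (hz : z ∈ V) {i : ℕ}
    (hi : IsFixedPt h (h^[i] z)) : IsFixedPt h z :=
  H.mem_of_iterate_mem hp (S := fixedPoints h) (fun _ => IsFixedPt.apply) hz hi

theorem iterate_ne (H : PeriodicOn h p V) (hp : p.Prime) {z : X} (hz : z ∈ V) (hne : h z ≠ z)
    {i : ℕ} (hi : 0 < i) (hip : i < p) : h^[i] z ≠ z := by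
  intro hfix
  have hgcd := IsPeriodicPt.gcd hfix (H.isPeriodicPt z hz)
  rw [Nat.gcd_comm, Nat.coprime_of_lt_prime hi.ne' hip hp] at hgcd
  exact hne hgcd

theorem birkhoffSum_apply (H : PeriodicOn h p V) {Y : Type*} [AddCommGroup Y] (g : X → Y) {z : X}
    (hz : z ∈ V) : birkhoffSum h g p (h z) = birkhoffSum h g p z := by
  rw [← sub_eq_zero, birkhoffSum_apply_sub_birkhoffSum, H.isPeriodicPt z hz, sub_self]

theorem continuousOn_birkhoffSum (H : PeriodicOn h p V) {Y : Type*} [TopologicalSpace Y]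
    [AddCommMonoid Y] [ContinuousAdd Y] {g : X → Y} (hg : ContinuousOn g V) (k : ℕ) :
    ContinuousOn (birkhoffSum h g k) V :=
  continuousOn_finsetSum _ fun i _ =>
    hg.comp (H.continuousOn.iterate H.mapsTo i) (H.mapsTo.iterate i)

theorem setOf_forall_iterate_mem (H : PeriodicOn h p V) (hp : 0 < p) {O : Set X}
    (hO : IsOpen O) : PeriodicOn h p {z | z ∈ V ∧ ∀ i, h^[i] z ∈ O} where
  isOpen := by
    have hiff : {z | z ∈ V ∧ ∀ i, h^[i] z ∈ O} = V ∩ ⋂ i ∈ Finset.range p, V ∩ h^[i] ⁻¹' O := by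
      ext z
      simp only [mem_ofPred_eq, mem_inter_iff, mem_iInter, Finset.mem_range, mem_preimage]
      refine and_congr_right fun hz => ⟨fun h i _ => ⟨hz, h i⟩, fun h i => ?_⟩
      rw [← (H.isPeriodicPt z hz).iterate_mod_apply]
      exact (h _ (Nat.mod_lt _ hp)).2
    rw [hiff]
    exact H.isOpen.inter <| isOpen_biInter_finset fun i _ =>
      (H.continuousOn.iterate H.mapsTo i).isOpen_inter_preimage H.isOpen hO
  mapsTo z hz := ⟨H.mapsTo hz.1, fun i => hz.2 (i + 1)⟩
  continuousOn := H.continuousOn.mono fun _ hz => hz.1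
  isPeriodicPt z hz := H.isPeriodicPt z hz.1

end PeriodicOn

theorem PeriodicOn.exists_isSlice_mem_nhds [T2Space X] (H : PeriodicOn h p V) (hp : p.Prime)
    {z : X} (hz : z ∈ V) (hne : h z ≠ z) : ∃ S ∈ 𝓝 z, S ⊆ V ∧ IsSlice h p S := by
  have hsep : ∀ i ∈ Finset.range p, ∃ S ∈ 𝓝 z, 0 < i → ∀ y ∈ S, h^[i] y ∉ S := by
    intro i hi
    rcases i.eq_zero_or_pos with rfl | hi0
    · exact ⟨univ, univ_mem, fun h => absurd h (lt_irrefl 0)⟩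
    obtain ⟨T, S, hT, hS, hTS⟩ :=
      t2_separation_nhds (H.iterate_ne hp hz hne hi0 (Finset.mem_range.mp hi))
    exact ⟨S ∩ h^[i] ⁻¹' T, inter_mem hS (H.continuousAt_iterate hz i hT),
      fun _ y hy hy' => disjoint_left.mp hTS hy.2 hy'.1⟩
  choose! S hS hSdisj using hsep
  refine ⟨V ∩ ⋂ i ∈ Finset.range p, S i,
    inter_mem (H.isOpen.mem_nhds hz) ((biInter_finset_mem _).mpr hS), inter_subset_left,
    fun y hy => H.isPeriodicPt y hy.1, fun y hy i hi hip hmem => ?_⟩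
  have hip' := Finset.mem_range.mpr hip
  exact hSdisj i hip' hi y (mem_iInter₂.mp hy.2 i hip') (mem_iInter₂.mp hmem.2 i hip')

theorem PeriodicOn.eventually_iterate_mem_iff (H : PeriodicOn h p V) {P B : Set X} (hPV : P ⊆ V)
    (hP : MapsTo h P P) (hB : ∀ z ∈ P, ∀ᶠ y in 𝓝 z, (y ∈ B ↔ z ∈ B)) {z : X} (hz : z ∈ P) (i : ℕ) :
    ∀ᶠ y in 𝓝 z, (h^[i] y ∈ B ↔ h^[i] z ∈ B) :=
  H.continuousAt_iterate (hPV hz) i (hB _ (hP.iterate i hz))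

theorem PeriodicOn.exists_isSlice_of_finset (H : PeriodicOn h p V) (hp : 0 < p) {P : Set X}
    (hPV : P ⊆ V) (hP : MapsTo h P P) {ι : Type*} (t : Finset ι) {B : ι → Set X}
    (hB : ∀ j ∈ t, IsSlice h p (B j))
    (hBP : ∀ j ∈ t, ∀ z ∈ P, ∀ᶠ y in 𝓝 z, (y ∈ B j ↔ z ∈ B j)) :
    ∃ D, IsSlice h p D ∧ (∀ z ∈ P, ∀ᶠ y in 𝓝 z, (y ∈ D ↔ z ∈ D)) ∧
      ∀ j ∈ t, ∀ z ∈ B j, ∃ i < p, h^[i] z ∈ D := by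
  classical
  induction t using Finset.induction_on with
  | empty => exact ⟨∅, ⟨by simp, by simp⟩, by simp, by simp⟩
  | insert j t _ ih =>
    simp only [Finset.forall_mem_insert] at hB hBP ⊢
    obtain ⟨D, hD, hDP, hDt⟩ := ih hB.2 hBP.2
    refine ⟨_, hD.union_diff_saturation hB.1, fun z hz => ?_, fun z hz => ?_, fun k hk z hz => ?_⟩
    · have hsat : ∀ᶠ y in 𝓝 z, ∀ i ∈ Iio p, (h^[i] y ∈ D ↔ h^[i] z ∈ D) :=
        (eventually_all_finite (finite_Iio p)).mpr fun i _ =>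
          H.eventually_iterate_mem_iff hPV hP hDP hz i
      filter_upwards [hsat, hDP z hz, hBP.1 z hz] with y hy hyD hyB
      have hex : (∃ i < p, h^[i] y ∈ D) ↔ ∃ i < p, h^[i] z ∈ D :=
        exists_congr fun i => and_congr_right fun hi => hy i hi
      simp only [mem_union, Set.mem_sdiff, mem_ofPred_eq, hyD, hyB, hex]
    · by_cases hzD : ∃ i < p, h^[i] z ∈ D
      · obtain ⟨i, hi, hiD⟩ := hzD
        exact ⟨i, hi, Or.inl hiD⟩
      · exact ⟨0, hp, Or.inr ⟨hz, hzD⟩⟩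
    · obtain ⟨i, hi, hiD⟩ := hDt k hk z hz
      exact ⟨i, hi, Or.inl hiD⟩

end PeriodicOn

section Perturbation

theorem exists_forall_dist_le_imp_ne {X Y : Type*} [TopologicalSpace X] [MetricSpace Y] {K : Set X}
    (hK : IsCompact K) {f : X → Y} (hf : ContinuousOn f K) {q : Y} (hq : ∀ x ∈ K, f x ≠ q) :
    ∃ d > 0, ∀ x ∈ K, ∀ y, dist y (f x) ≤ d → y ≠ q := by
  have hmem : (f '' K)ᶜ ∈ 𝓝 q :=
    (hK.image_of_continuousOn hf).isClosed.isOpen_compl.mem_nhds fun ⟨x, hx, hxq⟩ => hq x hx hxq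
  obtain ⟨d, hd, hball⟩ := nhds_basis_closedBall.mem_iff.mp hmem
  refine ⟨d, hd, fun x hx y hy hyq => hball ?_ (mem_image_of_mem f hx)⟩
  rwa [mem_closedBall, dist_comm, ← hyq]

variable {E : Type*} [NormedAddCommGroup E] [NormedSpace ℝ E] [FiniteDimensional ℝ E]

theorem exists_continuous_dist_le_forall_mem_ne [MeasurableSpace E] [BorelSpace E] {μ : Measure E}
    [μ.IsAddHaarMeasure] {F : E → E} (hF : Continuous F) {K : Set E} (hK : μ K = 0) (q : E)
    {d : ℝ} (hd : 0 < d) :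
    ∃ g : E → E, Continuous g ∧ (∀ y, dist (g y) (F y) ≤ d) ∧ ∀ y ∈ K, g y ≠ q := by
  obtain ⟨g, hg, hgF, -⟩ :=
    hF.exists_contDiff_approx 1 (ε := fun _ => d / 2) continuous_const fun _ => half_pos hd
  have hnull : μ (g '' K) = 0 :=
    addHaar_image_eq_zero_of_differentiableOn_of_addHaar_eq_zero _
      (hg.differentiable (by simp)).differentiableOn hK
  obtain ⟨c, hcq, hcg⟩ : ∃ c ∈ ball q (d / 2), c ∉ g '' K := by
    by_contra! hsub
    exact (measure_ball_pos μ q (half_pos hd)).not_ge (hnull ▸ measure_mono hsub)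
  refine ⟨fun y => g y + (q - c), by fun_prop, fun y => ?_, fun y hy hgy => hcg ⟨y, hy, ?_⟩⟩
  · calc dist (g y + (q - c)) (F y) ≤ dist (g y + (q - c)) (g y) + dist (g y) (F y) :=
          dist_triangle _ _ _
      _ ≤ d / 2 + d / 2 := by
          refine add_le_add ?_ (hgF y).le
          rw [dist_self_add_left, ← dist_eq_norm, dist_comm]
          exact (mem_ball.mp hcq).le
      _ = d := add_halves d
  · beta_reduce at hgy
    rwa [add_sub_left_comm, add_eq_left, sub_eq_zero] at hgy

variable {h f : E → E} {p : ℕ} {V : Set E}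

theorem PeriodicOn.exists_perturbation_ne [MeasurableSpace E] [BorelSpace E] {μ : Measure E}
    [μ.IsAddHaarMeasure] (H : PeriodicOn h p V) (hp : 0 < p) (hf : ContinuousOn f V)
    (hfh : ∀ z ∈ V, f (h z) = f z) {K S : Set E} (hK : IsClosed K) (hKμ : μ K = 0)
    (hKS : K ⊆ interior S) (hS : IsSlice h p S) (hSc : IsClosed S) (hSV : S ⊆ V) (q : E)
    {d : ℝ} (hd : 0 < d) :
    ∃ f' : E → E, ContinuousOn f' V ∧ (∀ z ∈ V, f' (h z) = f' z) ∧
      (∀ z, dist (f' z) (f z) ≤ d) ∧ ∀ z ∈ K, f' z ≠ q := by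
  have hp' : (0 : ℝ) < p := Nat.cast_pos.mpr hp
  obtain ⟨F, hF⟩ := ContinuousMap.exists_restrict_eq hSc
    ⟨S.domRestrict f, (hf.mono hSV).domRestrict⟩
  have hFf : ∀ y ∈ S, F y = f y := fun y hy => DFunLike.congr_fun hF ⟨y, hy⟩
  obtain ⟨g, hg, hgF, hgq⟩ :=
    exists_continuous_dist_le_forall_mem_ne F.continuous hKμ q (div_pos hd hp')
  obtain ⟨χ, hχ0, hχ1, hχ⟩ := exists_continuous_zero_one_of_isClosed
    isOpen_interior.isClosed_compl hK (disjoint_compl_left_iff_subset.mpr hKS)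
  have hχS : ∀ y, y ∉ S → χ y = 0 := fun y hy => hχ0 fun hint => hy (interior_subset hint)
  -- A perturbation supported in the slice `S`, to be spread over the orbits of `h`.
  let φ : E → E := fun y => χ y • (g y - f y)
  refine ⟨fun y => f y + birkhoffSum h φ p y, hf.add (H.continuousOn_birkhoffSum ?_ p),
    fun z hz => ?_, fun z => ?_, fun z hz => ?_⟩
  · exact χ.continuous.continuousOn.smul (hg.continuousOn.sub hf)
  · simp only [hfh z hz, H.birkhoffSum_apply φ hz]
  · have hφ : ∀ y, ‖φ y‖ ≤ d / p := by
      intro y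
      by_cases hy : y ∈ S
      · rw [norm_smul, Real.norm_of_nonneg (hχ y).1, ← hFf y hy, ← dist_eq_norm]
        exact (mul_le_of_le_one_left dist_nonneg (hχ y).2).trans (hgF y)
      · simp only [φ, hχS y hy, zero_smul, norm_zero]
        positivity
    rw [dist_self_add_left]
    refine (norm_sum_le_of_le _ fun i _ => hφ (h^[i] z)).trans_eq ?_
    rw [Finset.sum_const, Finset.card_range, nsmul_eq_mul, mul_div_cancel₀ _ hp'.ne']
  · have hzS : z ∈ S := interior_subset (hKS hz)
    have hsum : birkhoffSum h φ p z = φ z := by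
      refine Finset.sum_eq_single_of_mem 0 (Finset.mem_range.mpr hp) fun i hi hi0 => ?_
      simp only [φ, zero_smul,
        hχS _ (hS.iterate_notMem z hzS i (Nat.pos_of_ne_zero hi0) (Finset.mem_range.mp hi))]
    have hχz : χ z = 1 := hχ1 hz
    simp only [hsum, φ, hχz, one_smul, add_sub_cancel]
    exact hgq z hz

theorem PeriodicOn.exists_perturbation_forall_finset_ne [MeasurableSpace E] [BorelSpace E]
    {μ : Measure E} [μ.IsAddHaarMeasure] (H : PeriodicOn h p V) (hp : 0 < p)
    (hf : ContinuousOn f V) (hfh : ∀ z ∈ V, f (h z) = f z) {ι : Type*} (t : Finset ι)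
    {K S : ι → Set E} (hK : ∀ j ∈ t, IsCompact (K j)) (hKμ : ∀ j ∈ t, μ (K j) = 0)
    (hKS : ∀ j ∈ t, K j ⊆ interior (S j)) (hS : ∀ j ∈ t, IsSlice h p (S j))
    (hSc : ∀ j ∈ t, IsClosed (S j)) (hSV : ∀ j ∈ t, S j ⊆ V) (q : E) {d : ℝ} (hd : 0 < d) :
    ∃ f' : E → E, ContinuousOn f' V ∧ (∀ z ∈ V, f' (h z) = f' z) ∧
      (∀ z, dist (f' z) (f z) ≤ d) ∧ ∀ j ∈ t, ∀ z ∈ K j, f' z ≠ q := by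
  classical
  induction t using Finset.induction_on generalizing d with
  | empty => exact ⟨f, hf, hfh, fun z => (dist_self _).trans_le hd.le, by simp⟩
  | insert j t _ ih =>
    simp only [Finset.forall_mem_insert] at hK hKμ hKS hS hSc hSV ⊢
    obtain ⟨f₁, hf₁, hf₁h, hf₁d, hf₁q⟩ := ih hK.2 hKμ.2 hKS.2 hS.2 hSc.2 hSV.2 (half_pos hd)
    have hcompact : IsCompact (⋃ k ∈ t, K k) := t.isCompact_biUnion hK.2
    have hsub : (⋃ k ∈ t, K k) ⊆ V := iUnion₂_subset fun k hk =>
      (hKS.2 k hk).trans (interior_subset.trans (hSV.2 k hk))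
    obtain ⟨e, he, hmargin⟩ := exists_forall_dist_le_imp_ne hcompact (hf₁.mono hsub)
      (q := q) fun z hz => by
        obtain ⟨k, hk, hzk⟩ := mem_iUnion₂.mp hz
        exact hf₁q k hk z hzk
    obtain ⟨f₂, hf₂, hf₂h, hf₂d, hf₂q⟩ := H.exists_perturbation_ne hp hf₁ hf₁h hK.1.isClosed
      hKμ.1 hKS.1 hS.1 hSc.1 hSV.1 q (lt_min (half_pos hd) he)
    refine ⟨f₂, hf₂, hf₂h, fun z => ?_, hf₂q, fun k hk z hz => ?_⟩
    · calc dist (f₂ z) (f z) ≤ dist (f₂ z) (f₁ z) + dist (f₁ z) (f z) := dist_triangle _ _ _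
        _ ≤ d / 2 + d / 2 := add_le_add ((hf₂d z).trans (min_le_left _ _)) (hf₁d z)
        _ = d := add_halves d
    · exact hmargin z (mem_iUnion₂.mpr ⟨k, hk, hz⟩) _ ((hf₂d z).trans (min_le_right _ _))

theorem eventually_mem_closedBall_iff {X : Type*} [PseudoMetricSpace X] {c z : X} {r : ℝ}
    (hz : z ∉ sphere c r) : ∀ᶠ y in 𝓝 z, (y ∈ closedBall c r ↔ z ∈ closedBall c r) := by
  rcases lt_or_gt_of_ne hz with hlt | hgt
  · filter_upwards [isOpen_ball.mem_nhds hlt] with y hy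
    exact iff_of_true (ball_subset_closedBall hy) (mem_closedBall.mpr hlt.le)
  · have hz' : z ∉ closedBall c r := not_le.mpr hgt
    filter_upwards [isClosed_closedBall.isOpen_compl.mem_nhds hz'] with y hy
    exact iff_of_false hy hz'

theorem PeriodicOn.exists_perturbation_isSlice (H : PeriodicOn h p V) (hp : p.Prime)
    (hf : ContinuousOn f V) (hfh : ∀ z ∈ V, f (h z) = f z) {C : Set E} (hC : IsCompact C)
    (hCV : C ⊆ V) {q : E} (hq : ∀ z ∈ C, f z = q → h z ≠ z) {d : ℝ} (hd : 0 < d) :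
    ∃ (f' : E → E) (D : Set E), ContinuousOn f' V ∧ (∀ z ∈ V, f' (h z) = f' z) ∧
      (∀ z, dist (f' z) (f z) ≤ d) ∧ IsSlice h p D ∧
      (∀ z ∈ V, f' z = q → ∀ i, ∀ᶠ y in 𝓝 z, (h^[i] y ∈ D ↔ h^[i] z ∈ D)) ∧
      ∀ z ∈ C, f' z = q → ∃ i < p, h^[i] z ∈ D := by
  borelize E
  have hZ : IsCompact (C ∩ f ⁻¹' {q}) := hC.of_isClosed_subset
    ((hf.mono hCV).preimage_isClosed_of_isClosed hC.isClosed isClosed_singleton) inter_subset_left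
  have hslice : ∀ z ∈ C ∩ f ⁻¹' {q}, ∃ r > 0, closedBall z (2 * r) ⊆ V ∧
      IsSlice h p (closedBall z (2 * r)) := by
    rintro z ⟨hzC, hzq⟩
    obtain ⟨S, hS, hSV, hSs⟩ := H.exists_isSlice_mem_nhds hp (hCV hzC) (hq z hzC hzq)
    obtain ⟨r, hr, hrS⟩ := nhds_basis_closedBall.mem_iff.mp hS
    rw [← mul_div_cancel₀ r two_ne_zero] at hrS
    exact ⟨r / 2, half_pos hr, hrS.trans hSV, hSs.mono hrS⟩
  choose! r hr hrV hrS using hslice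
  obtain ⟨t, htZ, hcover⟩ := hZ.elim_nhds_subcover (fun z => ball z (r z))
    fun z hz => ball_mem_nhds _ (hr z hz)
  obtain ⟨e, he, hmargin⟩ := exists_forall_dist_le_imp_ne (q := q)
    (hC.diff (isOpen_biUnion fun z (_ : z ∈ t) => isOpen_ball (x := z) (ε := r z)))
    (hf.mono (sdiff_subset.trans hCV)) fun z hz hzq => hz.2 (hcover ⟨hz.1, hzq⟩)
  obtain ⟨f', hf', hf'h, hf'd, hf'q⟩ := H.exists_perturbation_forall_finset_ne hp.pos hf hfh t
    (μ := Measure.addHaar) (K := fun c => sphere c (r c)) (S := fun c => closedBall c (2 * r c))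
    (fun c _ => isCompact_sphere _ _)
    (fun c hc => Measure.addHaar_sphere_of_ne_zero _ _ (hr c (htZ c hc)).ne')
    (fun c hc => (sphere_subset_ball (by linarith [hr c (htZ c hc)])).trans
      ball_subset_interior_closedBall)
    (fun c hc => hrS c (htZ c hc)) (fun _ _ => isClosed_closedBall) (fun c hc => hrV c (htZ c hc))
    q (lt_min hd he)
  have hinv : MapsTo h {z | z ∈ V ∧ f' z = q} {z | z ∈ V ∧ f' z = q} := fun z hz =>
    ⟨H.mapsTo hz.1, (hf'h z hz.1).trans hz.2⟩
  obtain ⟨D, hD, hDloc, hDt⟩ := H.exists_isSlice_of_finset hp.pos (fun z hz => hz.1) hinv t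
    (B := fun c => closedBall c (r c))
    (fun c hc => (hrS c (htZ c hc)).mono (closedBall_subset_closedBall
      (by linarith [hr c (htZ c hc)])))
    fun c hc z hz => eventually_mem_closedBall_iff fun hsph => hf'q c hc z hsph hz.2
  refine ⟨f', D, hf', hf'h, fun z => (hf'd z).trans (min_le_left _ _), hD, fun z hz hzq i =>
    H.eventually_iterate_mem_iff (fun z hz => hz.1) hinv hDloc ⟨hz, hzq⟩ i, fun z hz hzq => ?_⟩
  by_contra hnot
  refine hmargin z ⟨hz, fun hball => hnot ?_⟩ _ ((hf'd z).trans (min_le_right _ _)) hzq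
  obtain ⟨c, hc, hzc⟩ := mem_iUnion₂.mp hball
  exact hDt c hc z (ball_subset_closedBall hzc)

end Perturbation

section DegreeOfPeriodicMap

open AffineMap

variable {n p : ℕ} {q : Fin n → ℝ} {f h : (Fin n → ℝ) → Fin n → ℝ} {U V W T K : Set (Fin n → ℝ)}

theorem eventually_latticeDegree_eq_one (hK : IsCompact K) (hU : IsOpen U) (hUK : U ⊆ K)
    (hf : ∀ x ∈ K, ContinuousAt f x) (hq : q ∈ U)
    (hzero : ∀ x ∈ K, ∀ t ∈ Icc (0 : ℝ) 1, lineMap x (f x) t = q → x ∈ U)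
    (hW : ∀ x ∈ K, f x = q → ∀ᶠ y in 𝓝 x, y ∈ W) :
    ∀ᶠ ε in 𝓝[>] (0 : ℝ), latticeDegree q ε f (U ∩ W) = 1 := by
  have hdeg := eventually_latticeDegree_eq (q := q) hK
    (F := fun z => lineMap z.2 (f z.2) z.1) (S := {z | z.2 ∈ U ∧ (z.1 < 1 ∨ z.2 ∈ W)})
    (fun z hz => hUK hz.1)
    (fun z hz => continuousAt_snd.lineMap ((hf _ hz.2).comp continuousAt_snd) continuousAt_fst)
    <| by
      rintro ⟨t, x⟩ ⟨ht, hx⟩ hzq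
      have hxU : ∀ᶠ z' : ℝ × (Fin n → ℝ) in 𝓝 (t, x), z'.2 ∈ U :=
        continuousAt_snd.eventually (hU.mem_nhds (hzero x hx t ht hzq))
      have htW : ∀ᶠ z' : ℝ × (Fin n → ℝ) in 𝓝 (t, x), z'.1 < 1 ∨ z'.2 ∈ W := by
        rcases ht.2.lt_or_eq with ht1 | rfl
        · exact (continuousAt_fst.eventually (gt_mem_nhds ht1)).mono fun _ => Or.inl
        · have hfx : f x = q := by simpa only [lineMap_apply_one] using hzq
          exact (continuousAt_snd.eventually (hW x hx hfx)).mono fun _ => Or.inr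
      filter_upwards [hxU, htW] with z' hz'U hz'W
      exact iff_of_true ⟨hz'U, hz'W⟩ ⟨hxU.self_of_nhds, htW.self_of_nhds⟩
  filter_upwards [hdeg, self_mem_nhdsWithin] with ε hε hε0
  simp only [lineMap_apply_one, lt_irrefl, false_or, lineMap_apply_zero,
    zero_lt_one, true_or, and_true] at hε
  exact hε.trans (latticeDegree_id q hε0 hq)

theorem eventually_latticeDegree_preimage_eq (hK : IsCompact K) (hU : IsOpen U) (hUK : U ⊆ K)
    (hh : ∀ x ∈ K, ContinuousAt h x) (hfh : ∀ x ∈ K, f (h x) = f x)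
    (hf : ∀ x ∈ K, ∀ t ∈ Icc (0 : ℝ) 1, ContinuousAt f (lineMap x (h x) t))
    (hzero : ∀ x ∈ K, ∀ t ∈ Icc (0 : ℝ) 1, f (lineMap x (h x) t) = q →
      x ∈ U ∧ ∀ᶠ y in 𝓝 (lineMap x (h x) t), (y ∈ T ↔ lineMap x (h x) t ∈ T)) :
    ∀ᶠ ε in 𝓝[>] (0 : ℝ),
      latticeDegree q ε f (U ∩ h ⁻¹' T) = latticeDegree q ε f (U ∩ T) := by
  let w : ℝ × (Fin n → ℝ) → Fin n → ℝ := fun z => lineMap z.2 (h z.2) z.1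
  have hw : ∀ z ∈ Icc (0 : ℝ) 1 ×ˢ K, ContinuousAt w z := fun z hz =>
    continuousAt_snd.lineMap ((hh _ hz.2).comp continuousAt_snd) continuousAt_fst
  -- The correction term vanishes on `K`; it turns `f ∘ h` into `f` at time `1`.
  have hdeg := eventually_latticeDegree_eq (q := q) hK
    (F := fun z => f (w z) + z.1 • (f z.2 - f (h z.2))) (S := {z | z.2 ∈ U ∧ w z ∈ T})
    (fun z hz => hUK hz.1)
    (fun z hz => by
      have hf0 : ContinuousAt f z.2 := by
        simpa only [lineMap_apply_zero] using hf _ hz.2 0 (left_mem_Icc.mpr zero_le_one)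
      have hf1 : ContinuousAt f (h z.2) := by
        simpa only [lineMap_apply_one] using hf _ hz.2 1 (right_mem_Icc.mpr zero_le_one)
      have hfh1 : ContinuousAt (fun z : ℝ × (Fin n → ℝ) => f (h z.2)) z :=
        (hf1.comp (hh _ hz.2)).comp (f := Prod.snd) continuousAt_snd
      exact (ContinuousAt.comp (f := w) (g := f) (hf _ hz.2 _ hz.1) (hw z hz)).add
        (continuousAt_fst.smul ((hf0.comp continuousAt_snd).sub hfh1))) <| by
      rintro z hz hzq
      rw [hfh _ hz.2, sub_self, smul_zero, add_zero] at hzq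
      obtain ⟨hzU, hT⟩ := hzero _ hz.2 _ hz.1 hzq
      filter_upwards [continuousAt_snd.eventually (hU.mem_nhds hzU), hw z hz hT] with z' hz'U hz'T
      exact and_congr (iff_of_true hz'U hzU) hz'T
  filter_upwards [hdeg] with ε hε
  simp only [w, lineMap_apply_one, one_smul, add_sub_cancel, lineMap_apply_zero, zero_smul,
    add_zero] at hε
  exact hε

theorem IsSlice.latticeDegree_saturation_eq_mul {D : Set (Fin n → ℝ)} (hD : IsSlice h p D)
    (hU : Bornology.IsBounded U) {ε : ℝ} (hε : 0 < ε)
    (hdeg : ∀ i < p, latticeDegree q ε f (U ∩ h^[i + 1] ⁻¹' D) =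
      latticeDegree q ε f (U ∩ h^[i] ⁻¹' D)) :
    latticeDegree q ε f (U ∩ {x | ∃ i < p, h^[i] x ∈ D}) = p * latticeDegree q ε f (U ∩ D) := by
  have hall : ∀ i < p, latticeDegree q ε f (U ∩ h^[i] ⁻¹' D) = latticeDegree q ε f (U ∩ D) := by
    intro i hi
    induction i with
    | zero => rfl
    | succ i ih => exact (hdeg i (by omega)).trans (ih (by omega))
  have hlt : ∀ i j, i < j → j < p → ∀ x, h^[i] x ∈ D → h^[j] x ∉ D := by
    intro i j hij hj x hi hmem
    refine hD.iterate_notMem _ hi (j - i) (by omega) (by omega) ?_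
    rwa [← iterate_add_apply, Nat.sub_add_cancel hij.le]
  have hdisj : (Finset.range p : Set ℕ).PairwiseDisjoint fun i => U ∩ h^[i] ⁻¹' D := by
    intro i hi j hj hij
    refine disjoint_left.mpr fun x hxi hxj => ?_
    rcases hij.lt_or_gt with hlt' | hgt
    · exact hlt i j hlt' (Finset.mem_range.mp hj) x hxi.2 hxj.2
    · exact hlt j i hgt (Finset.mem_range.mp hi) x hxj.2 hxi.2
  have hunion : U ∩ {x | ∃ i < p, h^[i] x ∈ D} = ⋃ i ∈ Finset.range p, U ∩ h^[i] ⁻¹' D := by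
    ext x
    simp
  rw [hunion, latticeDegree_biUnion _ q hε f (fun i _ => hU.subset inter_subset_left) hdisj,
    Finset.sum_congr rfl fun i hi => hall i (Finset.mem_range.mp hi), Finset.sum_const,
    Finset.card_range, nsmul_eq_mul]

/-- The degree of `f` on `U` is `1` because `f` is homotopic to the identity, and a multiple of `p`
because `f` is `h`-invariant and `h` is homotopic to the identity. -/
theorem PeriodicOn.notMem_of_homotopic_id (H : PeriodicOn h p V) (hp : 1 < p) (hK : IsCompact K)
    (hU : IsOpen U) (hUK : U ⊆ K) (hf : ContinuousOn f V) (hfh : ∀ x ∈ V, f (h x) = f x)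
    {D : Set (Fin n → ℝ)} (hD : IsSlice h p D)
    (hDloc : ∀ x ∈ V, f x = q → ∀ i, ∀ᶠ y in 𝓝 x, (h^[i] y ∈ D ↔ h^[i] x ∈ D))
    (hDcover : ∀ x ∈ K, f x = q → ∃ i < p, h^[i] x ∈ D)
    (hseg : ∀ x ∈ K, ∀ t ∈ Icc (0 : ℝ) 1, lineMap x (h x) t ∈ V)
    (hfzero : ∀ x ∈ K, ∀ t ∈ Icc (0 : ℝ) 1, lineMap x (f x) t = q → x ∈ U)
    (hhzero : ∀ x ∈ K, ∀ t ∈ Icc (0 : ℝ) 1, f (lineMap x (h x) t) = q → x ∈ U) : q ∉ U := by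
  intro hq
  have hKV : K ⊆ V := fun x hx => by
    simpa only [lineMap_apply_zero] using hseg x hx 0 (left_mem_Icc.mpr zero_le_one)
  have hfV : ∀ x ∈ V, ContinuousAt f x := fun x hx => hf.continuousAt (H.isOpen.mem_nhds hx)
  have hone := eventually_latticeDegree_eq_one hK hU hUK (fun x hx => hfV x (hKV hx)) hq hfzero
    (W := {x | ∃ i < p, h^[i] x ∈ D}) fun x hx hxq => by
      obtain ⟨i, hi, hxD⟩ := hDcover x hx hxq
      exact (hDloc x (hKV hx) hxq i).mono fun y hy => ⟨i, hi, hy.mpr hxD⟩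
  have hstep : ∀ i ∈ Iio p, ∀ᶠ ε in 𝓝[>] (0 : ℝ), latticeDegree q ε f (U ∩ h^[i + 1] ⁻¹' D) =
      latticeDegree q ε f (U ∩ h^[i] ⁻¹' D) := fun i _ => by
    rw [iterate_succ, preimage_comp]
    exact eventually_latticeDegree_preimage_eq hK hU hUK (fun x hx => H.continuousAt (hKV hx))
      (fun x hx => hfh x (hKV hx)) (fun x hx t ht => hfV _ (hseg x hx t ht))
      fun x hx t ht hxq => ⟨hhzero x hx t ht hxq, hDloc _ (hseg x hx t ht) hxq i⟩
  obtain ⟨ε, ⟨hε1, hεp⟩, hε⟩ :=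
    ((hone.and ((eventually_all_finite (finite_Iio p)).mpr hstep)).and self_mem_nhdsWithin).exists
  rw [hD.latticeDegree_saturation_eq_mul (hK.isBounded.subset hUK) hε hεp] at hε1
  exact hp.ne' (mod_cast Int.eq_one_of_mul_eq_one_right (Int.natCast_nonneg p) hε1)

end DegreeOfPeriodicMap

section Peak

open AffineMap

theorem birkhoffAverage_id_mem_of_convex {E : Type*} [AddCommGroup E] [Module ℝ E] {s : Set E}
    (hs : Convex ℝ s) {h : E → E} {p : ℕ} (hp : 0 < p) {z : E} (hz : ∀ i < p, h^[i] z ∈ s) :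
    birkhoffAverage ℝ h id p z ∈ s := by
  have hp' : (p : ℝ) ≠ 0 := Nat.cast_ne_zero.mpr hp.ne'
  rw [birkhoffAverage, birkhoffSum, Finset.smul_sum]
  refine hs.sum_mem (fun i _ => by positivity) ?_ fun i hi => hz i (Finset.mem_range.mp hi)
  rw [Finset.sum_const, Finset.card_range, nsmul_eq_mul, mul_inv_cancel₀ hp']

theorem sub_lt_apply_of_sub_div_lt_birkhoffAverage {α : Type*} {h : α → α} {p : ℕ} (hp : 0 < p)
    {g : α → ℝ} {z : α} {m η : ℝ} (hle : ∀ i < p, g (h^[i] z) ≤ m)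
    (hlt : m - η / p < birkhoffAverage ℝ h g p z) : m - η < g z := by
  have hp' : (0 : ℝ) < p := Nat.cast_pos.mpr hp
  have hsingle : m - g z ≤ ∑ i ∈ Finset.range p, (m - g (h^[i] z)) :=
    Finset.single_le_sum (f := fun i => m - g (h^[i] z))
      (fun i hi => sub_nonneg.mpr (hle i (Finset.mem_range.mp hi))) (Finset.mem_range.mpr hp)
  rw [Finset.sum_sub_distrib, Finset.sum_const, Finset.card_range, nsmul_eq_mul] at hsingle
  rw [birkhoffAverage, birkhoffSum, smul_eq_mul, inv_mul_eq_div, lt_div_iff₀ hp', sub_mul,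
    div_mul_cancel₀ _ hp'.ne'] at hlt
  linarith

theorem exists_forall_sub_lt_imp_mem_of_dist_sq_le {X : Type*} [PseudoMetricSpace X] {S U : Set X}
    {g : X → ℝ} {b : X} (hpeak : ∀ z ∈ S, dist z b ^ 2 ≤ g b - g z) (hU : U ∈ 𝓝 b) :
    ∃ η > 0, ∀ z ∈ S, g b - η < g z → z ∈ U := by
  obtain ⟨s, hs, hsU⟩ := Metric.mem_nhds_iff.mp hU
  refine ⟨s ^ 2, by positivity, fun z hz hlt => hsU (mem_ball.mpr ?_)⟩
  exact lt_of_pow_lt_pow_left₀ 2 hs.le (by linarith [hpeak z hz])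

theorem exists_forall_dist_le_imp_lineMap_ne {E : Type*} [NormedAddCommGroup E] [NormedSpace ℝ E]
    {C U : Set E} {f : E → E} {q : E} (hC : IsCompact C) (hU : IsOpen U) (hf : ContinuousOn f C)
    (hzero : ∀ z ∈ C, ∀ t ∈ Icc (0 : ℝ) 1, lineMap z (f z) t = q → z ∈ U) :
    ∃ d > 0, ∀ z ∈ C, ∀ t ∈ Icc (0 : ℝ) 1, ∀ y, dist y (f z) ≤ d → lineMap z y t = q → z ∈ U := by
  have hcont : ContinuousOn (fun x : ℝ × E => lineMap x.2 (f x.2) x.1) (Icc 0 1 ×ˢ (C \ U)) :=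
    continuousOn_snd.lineMap (hf.comp continuousOn_snd fun x hx => hx.2.1) continuousOn_fst
  obtain ⟨d, hd, hmargin⟩ := exists_forall_dist_le_imp_ne (isCompact_Icc.prod (hC.diff hU)) hcont
    (q := q) fun x hx hxq => hx.2.2 (hzero _ hx.2.1 _ hx.1 hxq)
  refine ⟨d, hd, fun z hz t ht y hy hyq => ?_⟩
  by_contra hzU
  refine hmargin (t, z) ⟨ht, hz, hzU⟩ _ (le_trans ?_ hy) hyq
  simp only [lineMap_apply_module, dist_add_left, dist_smul₀, Real.norm_of_nonneg ht.1]
  exact mul_le_of_le_one_left dist_nonneg ht.2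

variable {E : Type*} [NormedAddCommGroup E] [NormedSpace ℝ E] {h : E → E} {p : ℕ} {V U : Set E}
  {ℓ : E →L[ℝ] ℝ} {c : ℝ}

theorem PeriodicOn.mem_of_lineMap_birkhoffAverage_eq (H : PeriodicOn h p V) (hp : 0 < p)
    (hU : MapsTo h U U) (hcU : ∀ z ∈ V, h z ≠ z → c < ℓ z → z ∈ U) {q : E} (hq : h q ≠ q)
    (hcq : c < ℓ q) {z : E} (hz : z ∈ V) {t : ℝ} (ht : t ∈ Icc (0 : ℝ) 1)
    (hzq : lineMap z (birkhoffAverage ℝ h id p z) t = q) : h z ≠ z ∧ z ∈ U := by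
  have hne : h z ≠ z := fun hfix => hq <| by
    rw [IsFixedPt.birkhoffAverage_eq ℝ hfix id (Nat.cast_ne_zero.mpr hp.ne'), id_eq,
      lineMap_same_apply] at hzq
    rwa [← hzq]
  refine ⟨hne, ?_⟩
  obtain ⟨i, hi⟩ : ∃ i, c < ℓ (h^[i] z) := by
    by_contra! hle
    have hconv : Convex ℝ {w | ℓ w ≤ c} := convex_halfSpace_le ℓ.isLinear c
    have hmem := hconv.lineMap_mem (hle 0)
      (birkhoffAverage_id_mem_of_convex hconv hp fun i _ => hle i) ht
    rw [iterate_zero_apply, hzq] at hmem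
    exact hcq.not_ge hmem
  exact H.mem_of_iterate_mem hp hU hz
    (hcU _ (H.mapsTo.iterate i hz) (fun hfix => hne (H.isFixedPt_of_iterate hp hz hfix)) hi)

theorem PeriodicOn.mem_of_lt_lineMap (H : PeriodicOn h p V) (hp : 0 < p) (hU : MapsTo h U U)
    (hcU : ∀ z ∈ V, h z ≠ z → c < ℓ z → z ∈ U) {z : E} (hz : z ∈ V) (hne : h z ≠ z) {t : ℝ}
    (ht : t ∈ Icc (0 : ℝ) 1) (hlt : c < ℓ (lineMap z (h z) t)) : z ∈ U := by
  by_cases hcz : c < ℓ z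
  · exact hcU z hz hne hcz
  by_cases hchz : c < ℓ (h z)
  · have hne' : h (h z) ≠ h z := fun hfix => hne (H.isFixedPt_of_iterate hp hz (i := 1) hfix)
    exact H.mem_of_iterate_mem hp hU hz (i := 1) (hcU _ (H.mapsTo hz) hne' hchz)
  · have hconv : Convex ℝ {w | ℓ w ≤ c} := convex_halfSpace_le ℓ.isLinear c
    exact absurd (hconv.lineMap_mem (not_lt.mp hcz) (not_lt.mp hchz) ht) hlt.not_ge

theorem PeriodicOn.notMem_of_forall_lt_imp_mem {n : ℕ} {h : (Fin n → ℝ) → Fin n → ℝ}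
    {V U C : Set (Fin n → ℝ)} {ℓ : (Fin n → ℝ) →L[ℝ] ℝ} (H : PeriodicOn h p V) (hp : p.Prime)
    (hC : IsCompact C) (hCconv : Convex ℝ C) (hCV : C ⊆ V) (hU : PeriodicOn h p U) (hUC : U ⊆ C)
    (hcU : ∀ z ∈ V, h z ≠ z → c < ℓ z → z ∈ U) {q : Fin n → ℝ} (hq : h q ≠ q) (hcq : c < ℓ q)
    (hqc : ∀ z ∈ C, h z ≠ z → birkhoffAverage ℝ h id p z = q → c < ℓ z) : q ∉ U := by
  have hzero : ∀ z ∈ C, ∀ t ∈ Icc (0 : ℝ) 1, lineMap z (birkhoffAverage ℝ h id p z) t = q →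
      h z ≠ z ∧ z ∈ U := fun z hz t ht hzq =>
    H.mem_of_lineMap_birkhoffAverage_eq hp.pos hU.mapsTo hcU hq hcq (hCV hz) ht hzq
  have hne : ∀ z ∈ C, birkhoffAverage ℝ h id p z = q → h z ≠ z := fun z hz hzq =>
    (hzero z hz 1 (right_mem_Icc.mpr zero_le_one) (by rwa [lineMap_apply_one])).1
  have hcont : ContinuousOn (birkhoffAverage ℝ h id p) V :=
    (H.continuousOn_birkhoffSum continuousOn_id p).const_smul (p : ℝ)⁻¹
  obtain ⟨d₁, hd₁, hmargin₁⟩ := exists_forall_dist_le_imp_lineMap_ne hC hU.isOpen (hcont.mono hCV)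
    fun z hz t ht hzq => (hzero z hz t ht hzq).2
  obtain ⟨d₂, hd₂, hmargin₂⟩ := exists_forall_dist_le_imp_ne
    (hC.inter_right (isClosed_le ℓ.continuous continuous_const : IsClosed {z | ℓ z ≤ c}))
    (hcont.mono (inter_subset_left.trans hCV))
    fun z hz hzq => (hqc z hz.1 (hne z hz.1 hzq) hzq).not_ge hz.2
  obtain ⟨f, D, hf, hfh, hfd, hD, hDloc, hDcover⟩ := H.exists_perturbation_isSlice hp hcont
    (fun z hz => congrArg ((p : ℝ)⁻¹ • ·) (H.birkhoffSum_apply id hz)) hC hCV hne (lt_min hd₁ hd₂)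
  have hfzero : ∀ z ∈ C, ∀ t ∈ Icc (0 : ℝ) 1, lineMap z (f z) t = q → z ∈ U :=
    fun z hz t ht => hmargin₁ z hz t ht _ ((hfd z).trans (min_le_left _ _))
  have hclC : closure U ⊆ C := closure_minimal hUC hC.isClosed
  have hseg : ∀ z ∈ closure U, ∀ t ∈ Icc (0 : ℝ) 1, lineMap z (h z) t ∈ C := fun z hz t ht =>
    have hhz := hU.mapsTo.closure_of_continuousOn (H.continuousOn.mono (hclC.trans hCV)) hz
    hCconv.lineMap_mem (hclC hz) (hclC hhz) ht
  refine H.notMem_of_homotopic_id hp.one_lt (hC.of_isClosed_subset isClosed_closure hclC) hU.isOpen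
    subset_closure hf hfh hD hDloc (fun z hz => hDcover z (hclC hz))
    (fun z hz t ht => hCV (hseg z hz t ht)) (fun z hz => hfzero z (hclC hz)) fun z hz t ht hzq => ?_
  by_cases hfix : h z = z
  · rw [hfix, lineMap_same_apply] at hzq
    exact hfzero z (hclC hz) 1 (right_mem_Icc.mpr zero_le_one) (by rwa [lineMap_apply_one])
  · refine H.mem_of_lt_lineMap hp.pos hU.mapsTo hcU (hCV (hclC hz)) hfix ht ?_
    by_contra! hle
    exact hmargin₂ _ ⟨hseg z hz t ht, hle⟩ _ ((hfd _).trans (min_le_right _ _)) hzq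

theorem PeriodicOn.mem_interior_fixedPoints_of_dist_sq_le {n : ℕ} {h : (Fin n → ℝ) → Fin n → ℝ}
    {V : Set (Fin n → ℝ)} (H : PeriodicOn h p V) (hp : p.Prime) {b : Fin n → ℝ} (hbV : b ∈ V)
    (hb : IsFixedPt h b) (ℓ : (Fin n → ℝ) →L[ℝ] ℝ)
    (hpeak : ∀ z ∈ V, h z ≠ z → dist z b ^ 2 ≤ ℓ b - ℓ z) :
    b ∈ interior (fixedPoints h) := by
  by_contra hint
  have hfreq : ∃ᶠ z in 𝓝 b, ¬ h z = z := fun hev =>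
    hint (mem_interior_iff_mem_nhds.mpr (hev.mono fun _ => not_not.mp))
  have hp' : (0 : ℝ) < p := Nat.cast_pos.mpr hp.pos
  obtain ⟨r, hr, hrV⟩ := nhds_basis_closedBall.mem_iff.mp (H.isOpen.mem_nhds hbV)
  let U := {z | z ∈ V ∧ ∀ i, h^[i] z ∈ ball b r}
  have hU : PeriodicOn h p U := H.setOf_forall_iterate_mem hp.pos isOpen_ball
  have hbU : b ∈ U := ⟨hbV, fun i => by rw [hb.iterate i]; exact mem_ball_self hr⟩
  obtain ⟨η, hη, hηU⟩ := exists_forall_sub_lt_imp_mem_of_dist_sq_le (S := {z ∈ V | h z ≠ z})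
    (fun z hz => hpeak z hz.1 hz.2) (hU.isOpen.mem_nhds hbU)
  have hlt : ∀ᶠ z in 𝓝 b, ℓ b - η / p < ℓ z :=
    ℓ.continuous.continuousAt.eventually (lt_mem_nhds (sub_lt_self _ (div_pos hη hp')))
  obtain ⟨q, hqne, hqlt, hqU⟩ :=
    (hfreq.and_eventually (hlt.and (hU.isOpen.mem_nhds hbU))).exists
  have hle : ∀ z ∈ V, h z ≠ z → ℓ z ≤ ℓ b := fun z hz hne =>
    sub_nonneg.mp ((sq_nonneg _).trans (hpeak z hz hne))
  have hcq : ℓ b - η < ℓ q :=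
    (sub_le_sub_left (div_le_self hη.le (mod_cast hp.one_lt.le)) _).trans_lt hqlt
  refine H.notMem_of_forall_lt_imp_mem hp (isCompact_closedBall b r) (convex_closedBall b r) hrV hU
    (fun z hz => ball_subset_closedBall (hz.2 0)) (fun z hz hne => hηU z ⟨hz, hne⟩) hqne hcq
    (fun z hz hne hzq => ?_) hqU
  refine sub_lt_apply_of_sub_div_lt_birkhoffAverage hp.pos (fun i _ => hle _
    (H.mapsTo.iterate i (hrV hz)) fun hfix => hne (H.isFixedPt_of_iterate hp.pos (hrV hz) hfix)) ?_
  rwa [← hzq, map_birkhoffAverage ℝ ℝ] at hqlt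

end Peak

section Newman

namespace PeriodicOn

variable {X Y : Type*} [TopologicalSpace X] [TopologicalSpace Y] {h : X → X} {p k : ℕ} {V : Set X}

theorem iterate (H : PeriodicOn h (p * k) V) : PeriodicOn h^[k] p V where
  isOpen := H.isOpen
  mapsTo := H.mapsTo.iterate k
  continuousOn := H.continuousOn.iterate H.mapsTo k
  isPeriodicPt z hz := by
    rw [IsPeriodicPt, ← iterate_mul, mul_comm]
    exact H.isPeriodicPt z hz

theorem mapsTo_inter_interior (H : PeriodicOn h p V) (hp : 0 < p) {S : Set X} (hS : MapsTo h S S) :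
    MapsTo h (V ∩ interior S) (V ∩ interior S) := by
  rintro y ⟨hyV, hyS⟩
  refine ⟨H.mapsTo hyV, mem_interior_iff_mem_nhds.mpr ?_⟩
  have hy : h^[p - 1] (h y) = y := by
    rw [← iterate_succ_apply, Nat.succ_eq_add_one, Nat.sub_add_cancel hp, H.isPeriodicPt y hyV]
  have hpre : ∀ᶠ w in 𝓝 (h y), h^[p - 1] w ∈ interior S :=
    (H.continuousAt_iterate (H.mapsTo hyV) (p - 1)).eventually_mem
      (isOpen_interior.mem_nhds (hy.symm ▸ hyS))
  filter_upwards [hpre, H.isOpen.mem_nhds (H.mapsTo hyV)] with w hw hwV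
  exact H.mem_of_iterate_mem hp hS hwV (interior_subset hw)

theorem inter_interior_fixedPoints_iterate (H : PeriodicOn h p V) (hp : 0 < p) (k : ℕ) :
    PeriodicOn h k (V ∩ interior (fixedPoints h^[k])) where
  isOpen := H.isOpen.inter isOpen_interior
  mapsTo := H.mapsTo_inter_interior hp
    fun _ hy => IsFixedPt.map hy (Function.Commute.self_iterate h k)
  continuousOn := H.continuousOn.mono inter_subset_left
  isPeriodicPt _ hz := interior_subset (s := fixedPoints h^[k]) hz.2

theorem conj (H : PeriodicOn h p V) (φ : OpenPartialHomeomorph X Y) (hV : V ⊆ φ.source) :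
    PeriodicOn (φ ∘ h ∘ φ.symm) p (φ '' V) := by
  have hφ : ∀ z ∈ V, (φ ∘ h ∘ φ.symm) (φ z) = φ (h z) := fun z hz => by
    rw [comp_apply, comp_apply, φ.left_inv (hV hz)]
  refine ⟨φ.isOpen_image_of_subset_source H.isOpen hV, ?_, ?_, ?_⟩
  · rintro _ ⟨z, hz, rfl⟩
    exact ⟨h z, H.mapsTo hz, (hφ z hz).symm⟩
  · have hsymm : MapsTo φ.symm (φ '' V) V := by
      rintro _ ⟨z, hz, rfl⟩
      rwa [φ.left_inv (hV hz)]
    have hcont : ContinuousOn φ.symm (φ '' V) :=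
      φ.continuousOn_symm.mono (image_subset_iff.mpr fun z hz => φ.map_source (hV hz))
    exact (φ.continuousOn.mono hV).comp (H.continuousOn.comp hcont hsymm) (H.mapsTo.comp hsymm)
  · rintro _ ⟨z, hz, rfl⟩
    have hiter : ∀ i, (φ ∘ h ∘ φ.symm)^[i] (φ z) = φ (h^[i] z) := fun i => by
      induction i with
      | zero => rfl
      | succ i ih => rw [iterate_succ_apply', ih, hφ _ (H.mapsTo.iterate i hz), iterate_succ_apply']
    rw [IsPeriodicPt, IsFixedPt, hiter, H.isPeriodicPt z hz]

theorem conj_apply_eq_iff (H : PeriodicOn h p V) (φ : OpenPartialHomeomorph X Y)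
    (hV : V ⊆ φ.source) {z : X} (hz : z ∈ V) : (φ ∘ h ∘ φ.symm) (φ z) = φ z ↔ h z = z := by
  rw [comp_apply, comp_apply, φ.left_inv (hV hz)]
  exact φ.injOn.eq_iff (hV (H.mapsTo hz)) (hV hz)

theorem mem_interior_fixedPoints_conj_iff (H : PeriodicOn h p V) (φ : OpenPartialHomeomorph X Y)
    (hV : V ⊆ φ.source) {z : X} (hz : z ∈ V) :
    φ z ∈ interior (fixedPoints (φ ∘ h ∘ φ.symm)) ↔ z ∈ interior (fixedPoints h) := by
  simp only [mem_interior_iff_mem_nhds, ← φ.map_nhds_eq (hV hz), mem_map]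
  refine eventually_congr ?_
  filter_upwards [H.isOpen.mem_nhds hz] with y hy
  exact H.conj_apply_eq_iff φ hV hy

end PeriodicOn

theorem isFixedPt_of_mem_closure_fixedPoints {X : Type*} [TopologicalSpace X] [T2Space X]
    {h : X → X} {x : X} (hx : ContinuousAt h x) (hcl : x ∈ closure (fixedPoints h)) :
    IsFixedPt h x := by
  by_contra hne
  have hnhds : (fun z => (h z, z)) ⁻¹' (diagonal X)ᶜ ∈ 𝓝 x :=
    (hx.prodMk continuousAt_id).preimage_mem_nhds (isClosed_diagonal.isOpen_compl.mem_nhds hne)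
  obtain ⟨z, hz, hfix⟩ := mem_closure_iff_nhds.mp hcl _ hnhds
  exact hz hfix

/-- Inversion in the sphere with center `c` and radius `R`, as a local homeomorphism of the
complement of `c`. -/
noncomputable def inversionHomeomorph {E : Type*} [NormedAddCommGroup E] [InnerProductSpace ℝ E]
    (c : E) {R : ℝ} (hR : R ≠ 0) : OpenPartialHomeomorph E E where
  toFun := EuclideanGeometry.inversion c R
  invFun := EuclideanGeometry.inversion c R
  source := {c}ᶜ
  target := {c}ᶜ
  map_source' _ hx := mt (EuclideanGeometry.inversion_eq_center hR).mp hx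
  map_target' _ hx := mt (EuclideanGeometry.inversion_eq_center hR).mp hx
  left_inv' x _ := EuclideanGeometry.inversion_inversion c hR x
  right_inv' x _ := EuclideanGeometry.inversion_inversion c hR x
  open_source := isOpen_compl_singleton
  open_target := isOpen_compl_singleton
  continuousOn_toFun := continuousOn_const.inversion continuousOn_const continuousOn_id fun _ => id
  continuousOn_invFun := continuousOn_const.inversion continuousOn_const continuousOn_id fun _ => id

theorem dist_sq_le_of_dist_le_dist_inversion {E : Type*} [NormedAddCommGroup E]
    [InnerProductSpace ℝ E] {a b z : E} (hba : b ≠ a) (hz : z ≠ a)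
    (hle : dist a b ≤ dist a (EuclideanGeometry.inversion a (dist a b) z)) :
    dist z b ^ 2 ≤ 2 * (inner ℝ (b - a) b - inner ℝ (b - a) z) := by
  rw [EuclideanGeometry.dist_center_inversion, le_div_iff₀ (dist_pos.mpr hz.symm), sq] at hle
  have hza : ‖z - a‖ ^ 2 ≤ ‖b - a‖ ^ 2 := by
    simp only [← dist_eq_norm, dist_comm _ a]
    gcongr
    exact le_of_mul_le_mul_left hle (dist_pos.mpr hba.symm)
  have hsplit : z - a = (z - b) + (b - a) := by abel
  rw [hsplit, norm_add_sq_real, real_inner_comm] at hza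
  rw [dist_eq_norm, ← inner_sub_right, ← neg_sub z b, inner_neg_right]
  linarith

/-- After inversion in the sphere about `a` through `b`, the points moved by `h` lie in the closed
ball about `a` through `b`, so the linear functional `⟪b - a, ·⟫` peaks at `b`. -/
theorem PeriodicOn.mem_interior_fixedPoints_of_dist_le {n p : ℕ}
    {h : EuclideanSpace ℝ (Fin n) → EuclideanSpace ℝ (Fin n)} {V : Set (EuclideanSpace ℝ (Fin n))}
    (H : PeriodicOn h p V) (hp : p.Prime) {a b : EuclideanSpace ℝ (Fin n)} (hbV : b ∈ V)
    (hb : IsFixedPt h b) (hba : b ≠ a) (hle : ∀ z ∈ V, h z ≠ z → dist a b ≤ dist a z) :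
    b ∈ interior (fixedPoints h) := by
  let W := {z | z ∈ V ∧ ∀ i, h^[i] z ∈ ({a}ᶜ : Set (EuclideanSpace ℝ (Fin n)))}
  have hW : PeriodicOn h p W := H.setOf_forall_iterate_mem hp.pos isOpen_compl_singleton
  have hbW : b ∈ W := ⟨hbV, fun i => by rwa [hb.iterate i]⟩
  let e := EuclideanSpace.equiv (Fin n) ℝ
  let ι := inversionHomeomorph a (dist_ne_zero.mpr hba.symm)
  let φ := ι.transHomeomorph e.toHomeomorph
  have hWφ : W ⊆ φ.source := fun z hz => hz.2 0
  have hφb : φ b = e b :=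
    congrArg e (EuclideanGeometry.inversion_of_mem_sphere (mem_sphere.mpr (dist_comm b a)))
  rw [← hW.mem_interior_fixedPoints_conj_iff φ hWφ hbW]
  refine (hW.conj φ hWφ).mem_interior_fixedPoints_of_dist_sq_le hp (mem_image_of_mem φ hbW)
    ((hW.conj_apply_eq_iff φ hWφ hbW).mpr hb)
    (((2 : ℝ) • innerSL ℝ (b - a)).comp (e.symm : (Fin n → ℝ) →L[ℝ] EuclideanSpace ℝ (Fin n))) ?_
  rintro _ ⟨z, hz, rfl⟩ hne
  have hmoved : h z ≠ z := mt (hW.conj_apply_eq_iff φ hWφ hz).mpr hne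
  have hιz : ι z ≠ a := ι.map_source (hWφ hz)
  have hinv : EuclideanGeometry.inversion a (dist a b) (ι z) = z := ι.left_inv (hWφ hz)
  have hpeak := dist_sq_le_of_dist_le_dist_inversion hba hιz (hinv.symm ▸ hle z hz.1 hmoved)
  have hdist : dist (φ z) (φ b) ≤ dist (ι z) b := by
    rw [hφb]
    have hlip := (PiLp.lipschitzWith_ofLp 2 fun _ : Fin n => ℝ).dist_le_mul (ι z) b
    rwa [NNReal.coe_one, one_mul] at hlip
  calc dist (φ z) (φ b) ^ 2 ≤ dist (ι z) b ^ 2 := by gcongr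
    _ ≤ 2 * (inner ℝ (b - a) b - inner ℝ (b - a) (ι z)) := hpeak
    _ = _ := by
      rw [hφb, mul_sub]
      rfl

theorem PeriodicOn.mem_interior_fixedPoints_of_euclideanSpace {n p : ℕ}
    {h : EuclideanSpace ℝ (Fin n) → EuclideanSpace ℝ (Fin n)} {V : Set (EuclideanSpace ℝ (Fin n))}
    (H : PeriodicOn h p V) (hp : p.Prime) {x : EuclideanSpace ℝ (Fin n)} (hx : x ∈ V)
    (hcl : x ∈ closure (interior (fixedPoints h))) : x ∈ interior (fixedPoints h) := by
  by_contra hint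
  have hfreq : ∃ᶠ z in 𝓝 x, ¬ h z = z := fun hev =>
    hint (mem_interior_iff_mem_nhds.mpr (hev.mono fun _ => not_not.mp))
  obtain ⟨r, hr, hrV⟩ := nhds_basis_ball.mem_iff.mp (H.isOpen.mem_nhds hx)
  obtain ⟨a, ha, hxa⟩ := Metric.mem_closure_iff.mp hcl (r / 4) (by positivity)
  obtain ⟨y, hy, hyx⟩ := (hfreq.and_eventually (ball_mem_nhds x (by positivity : 0 < r / 4))).exists
  have hyV : y ∈ V := hrV (ball_subset_ball (by linarith) hyx)
  let A := {z ∈ V | h z ≠ z}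
  obtain ⟨b, hb, hab⟩ :=
    (isClosed_closure (s := A)).exists_infDist_eq_dist ⟨y, subset_closure ⟨hyV, hy⟩⟩ a
  have hmin : ∀ z ∈ V, h z ≠ z → dist a b ≤ dist a z := fun z hz hne =>
    hab ▸ infDist_le_dist_of_mem (subset_closure ⟨hz, hne⟩)
  have hbV : b ∈ V := hrV <| mem_ball.mpr <| by
    have hay := hmin y hyV hy
    linarith [dist_triangle a x y, dist_triangle b a x, dist_comm a b, dist_comm a x, dist_comm x y]
  have hbint : b ∉ interior (fixedPoints h) := fun hbi => by
    obtain ⟨z, hzi, -, hz⟩ := mem_closure_iff.mp hb _ isOpen_interior hbi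
    exact hz (interior_subset (s := fixedPoints h) hzi)
  have hba : b ≠ a := fun hba => hbint (hba ▸ ha)
  have hbfix : IsFixedPt h b := by
    have hbcl : b ∈ closure (ball a (dist a b)) := by
      rw [closure_ball _ (dist_ne_zero.mpr hba.symm), mem_closedBall, dist_comm]
    refine isFixedPt_of_mem_closure_fixedPoints (H.continuousAt hbV) ?_
    refine closure_mono ?_ (H.isOpen.closure_inter ⟨hbcl, hbV⟩)
    rintro z ⟨hza, hzV⟩
    by_contra hne
    exact (hmin z hzV hne).not_gt (mem_ball'.mp hza)
  exact hbint (H.mem_interior_fixedPoints_of_dist_le hp hbV hbfix hba hmin)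

theorem PeriodicOn.mem_interior_fixedPoints_of_prime {n p : ℕ} {M : Type*} [TopologicalSpace M]
    [T2Space M] [ChartedSpace (EuclideanSpace ℝ (Fin n)) M] {h : M → M} {V : Set M}
    (H : PeriodicOn h p V) (hp : p.Prime) {x : M} (hx : x ∈ V)
    (hcl : x ∈ closure (interior (fixedPoints h))) : x ∈ interior (fixedPoints h) := by
  have hfix : IsFixedPt h x := isFixedPt_of_mem_closure_fixedPoints (H.continuousAt hx)
    (closure_mono interior_subset hcl)
  let φ := chartAt (EuclideanSpace ℝ (Fin n)) x
  let W := {z | z ∈ V ∧ ∀ i, h^[i] z ∈ φ.source}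
  have hW : PeriodicOn h p W := H.setOf_forall_iterate_mem hp.pos φ.open_source
  have hxW : x ∈ W := ⟨hx, fun i => by
    rw [hfix.iterate i]
    exact mem_chart_source _ x⟩
  have hWφ : W ⊆ φ.source := fun z hz => hz.2 0
  rw [← hW.mem_interior_fixedPoints_conj_iff φ hWφ hxW]
  refine (hW.conj φ hWφ).mem_interior_fixedPoints_of_euclideanSpace hp (mem_image_of_mem φ hxW) ?_
  have hclW : x ∈ closure (W ∩ interior (fixedPoints h)) :=
    hW.isOpen.inter_closure ⟨hxW, hcl⟩
  refine closure_mono ?_ (mem_closure_image (φ.continuousAt (hWφ hxW)) hclW)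
  rintro _ ⟨z, ⟨hzW, hz⟩, rfl⟩
  exact (hW.mem_interior_fixedPoints_conj_iff φ hWφ hzW).mpr hz

/-- **Newman's theorem**, for homeomorphisms defined on an open set. -/
theorem PeriodicOn.mem_interior_fixedPoints {n m : ℕ} {M : Type*} [TopologicalSpace M] [T2Space M]
    [ChartedSpace (EuclideanSpace ℝ (Fin n)) M] {h : M → M} {V : Set M} (H : PeriodicOn h m V)
    (hm : 0 < m) {x : M} (hx : x ∈ V) (hcl : x ∈ closure (interior (fixedPoints h))) :
    x ∈ interior (fixedPoints h) := by
  induction m using induction_on_primes generalizing V with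
  | zero => exact absurd hm (lt_irrefl 0)
  | one => exact interior_maximal H.isPeriodicPt H.isOpen hx
  | prime_mul p k hp ih =>
    have hsub : fixedPoints h ⊆ fixedPoints h^[k] := fun y hy => IsFixedPt.iterate hy k
    have hxk := H.iterate.mem_interior_fixedPoints_of_prime (n := n) hp hx
      (closure_mono (interior_mono hsub) hcl)
    exact ih (H.inter_interior_fixedPoints_iterate hm k) (Nat.pos_of_mul_pos_left hm) ⟨hx, hxk⟩

theorem PeriodicOn.subset_interior_fixedPoints {n m : ℕ} {M : Type*} [TopologicalSpace M]
    [T2Space M] [ChartedSpace (EuclideanSpace ℝ (Fin n)) M] {h : M → M} {V : Set M}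
    (H : PeriodicOn h m V) (hm : 0 < m) (hV : IsPreconnected V)
    (hne : (V ∩ interior (fixedPoints h)).Nonempty) : V ⊆ interior (fixedPoints h) :=
  hV.subset_of_closure_inter_subset isOpen_interior hne fun _ hx =>
    H.mem_interior_fixedPoints (n := n) hm hx.2 hx.1

end Newman

section OrbitSpace

open MulAction Pointwise

variable {G M : Type*} [Group G] [TopologicalSpace M] [MulAction G M]

theorem isClosed_orbit_of_t2Space_quotient [T2Space (Quotient (orbitRel G M))] (x : M) :
    IsClosed (orbit G x) := by
  have hpre : Quotient.mk (orbitRel G M) ⁻¹' {Quotient.mk (orbitRel G M) x} = orbit G x := by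
    ext y
    rw [mem_preimage, mem_singleton_iff, Quotient.eq, orbitRel_apply]
  exact hpre ▸ isClosed_singleton.preimage continuous_quotient_mk'

theorem isOpen_setOf_orbit_subset [CompactSpace M] [T2Space (Quotient (orbitRel G M))] {U : Set M}
    (hU : IsOpen U) : IsOpen {y : M | orbit G y ⊆ U} := by
  have hclosed : IsClosed (Quotient.mk (orbitRel G M) '' Uᶜ) :=
    (hU.isClosed_compl.isCompact.image continuous_quotient_mk').isClosed
  have hcompl : {y : M | orbit G y ⊆ U} =
      (Quotient.mk (orbitRel G M) ⁻¹' (Quotient.mk (orbitRel G M) '' Uᶜ))ᶜ := by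
    ext y
    simp only [mem_ofPred_eq, mem_compl_iff, mem_preimage, mem_image, Quotient.eq, orbitRel_apply,
      not_exists, not_and', not_not, subset_def]
  exact hcompl ▸ (hclosed.preimage continuous_quotient_mk').isOpen_compl

theorem finite_of_isPretransitive [T2Space M] [CompactSpace M] [Countable M]
    [ContinuousConstSMul G M] [IsPretransitive G M] : Finite M := by
  rcases isEmpty_or_nonempty M with _ | _
  · infer_instance
  obtain ⟨x, hne⟩ := nonempty_interior_of_iUnion_of_closed
    (f := fun x : M => ({x} : Set M)) (fun _ => isClosed_singleton) (iUnion_of_singleton M)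
  have hx : IsOpen {x} := interior_eq_iff_isOpen.mp (hne.subset_singleton_iff.mp interior_subset)
  have : DiscreteTopology M := discreteTopology_iff_isOpen_singleton.mpr fun z => by
    obtain ⟨g, rfl⟩ := exists_smul_eq G x z
    rw [← smul_set_singleton]
    exact hx.smul g
  exact finite_of_compact_of_discrete

theorem finite_orbit_of_t2Space_quotient [Countable G] [CompactSpace M] [T2Space M]
    [ContinuousConstSMul G M] [T2Space (Quotient (orbitRel G M))] (x : M) :
    (orbit G x).Finite := by
  have : CompactSpace (orbit G x) :=
    isCompact_iff_compactSpace.mp (isClosed_orbit_of_t2Space_quotient x).isCompact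
  have : Countable (orbit G x) := (countable_range fun g : G => g • x).to_subtype
  have : ContinuousConstSMul G (orbit G x) := ⟨fun g =>
    ((continuous_const_smul g).comp continuous_subtype_val).subtype_mk _⟩
  exact finite_of_isPretransitive (G := G)

theorem exists_isPreconnected_forall_stabilizer_smul_mem [CompactSpace M] [T2Space M]
    [LocallyConnectedSpace M] [ContinuousConstSMul G M] [T2Space (Quotient (orbitRel G M))] {x : M}
    (hfin : (orbit G x).Finite) {O : Set M} (hO : IsOpen O) (hxO : x ∈ O) :
    ∃ N, IsOpen N ∧ x ∈ N ∧ N ⊆ O ∧ IsPreconnected N ∧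
      ∀ g ∈ stabilizer G x, MapsTo (g • ·) N N := by
  obtain ⟨A, B, hA, hB, hxA, hB', hAB⟩ := SeparatedNhds.of_isCompact_isCompact isCompact_singleton
    (hfin.subset (sdiff_subset : orbit G x \ {x} ⊆ orbit G x)).isCompact disjoint_sdiff_right
  let V := A ∩ O
  have hV : IsOpen V := hA.inter hO
  have hxV : x ∈ V := ⟨hxA rfl, hxO⟩
  have hVB : Disjoint V B := hAB.mono_left inter_subset_left
  let W := {y : M | orbit G y ⊆ V ∪ B}
  have hW : IsOpen W := isOpen_setOf_orbit_subset (hV.union hB)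
  have hxW : x ∈ W := fun y hy => by
    rcases eq_or_ne y x with rfl | hyx
    exacts [.inl hxV, .inr (hB' ⟨hy, hyx⟩)]
  let N := connectedComponentIn (W ∩ V) x
  have hNWV : N ⊆ W ∩ V := connectedComponentIn_subset _ x
  have hxN : x ∈ N := mem_connectedComponentIn ⟨hxW, hxV⟩
  refine ⟨N, (hW.inter hV).connectedComponentIn, hxN, fun y hy => (hNWV hy).2.2,
    isPreconnected_connectedComponentIn, fun g hg y hy => ?_⟩
  have hgN : IsPreconnected ((g • ·) '' N) :=
    isPreconnected_connectedComponentIn.image _ (continuous_const_smul g).continuousOn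
  have hxgN : x ∈ (g • ·) '' N := ⟨x, hxN, hg⟩
  have hgNW : (g • ·) '' N ⊆ W := by
    rintro _ ⟨z, hz, rfl⟩
    exact (orbit_smul g z).trans_subset (hNWV hz).1
  have hgNV : (g • ·) '' N ⊆ V := hgN.subset_left_of_subset_union hV hB hVB
    (fun z hz => hgNW hz (mem_orbit_self z)) ⟨x, hxgN, hxV⟩
  exact hgN.subset_connectedComponentIn hxgN (subset_inter hgNW hgNV) (mem_image_of_mem _ hy)

omit [TopologicalSpace M] in
theorem index_stabilizer_ne_zero {x : M} (hfin : (orbit G x).Finite) :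
    (stabilizer G x).index ≠ 0 := by
  rw [index_stabilizer]
  exact ((ncard_pos hfin).mpr (nonempty_orbit x)).ne'

end OrbitSpace

theorem eqOn_iterate {X : Type*} {f f' : X → X} {S : Set X} (hf : EqOn f f' S) (hS : MapsTo f' S S)
    (k : ℕ) : EqOn f^[k] f'^[k] S := by
  induction k with
  | zero => exact eqOn_refl _ _
  | succ k ih => exact fun y hy => (congrArg f^[k] (hf hy)).trans (ih (hS hy))

section LocallyPeriodic

open MulAction Pointwise

variable {G M : Type*} [Group G] [TopologicalSpace M] [MulAction G M] {g : G} {k : ℕ}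

variable (M) in
/-- The locally periodic points of `g`: those near which some positive power of `g` acts as the
identity. The power may depend on the point. -/
def locallyPeriodicPts (g : G) : Set M := ⋃ k > 0, interior (fixedBy M (g ^ k))

theorem mem_locallyPeriodicPts {x : M} :
    x ∈ locallyPeriodicPts M g ↔ ∃ k > 0, x ∈ interior (fixedBy M (g ^ k)) := by
  simp only [locallyPeriodicPts, mem_iUnion, exists_prop]

theorem isOpen_locallyPeriodicPts : IsOpen (locallyPeriodicPts M g) :=
  isOpen_biUnion fun _ _ => isOpen_interior

omit [TopologicalSpace M] in
theorem fixedBy_subset_fixedBy_pow (g : G) (k : ℕ) : fixedBy M g ⊆ fixedBy M (g ^ k) := by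
  simpa only [zpow_natCast] using fixedBy_subset_fixedBy_zpow M g k

theorem locallyPeriodicPts_pow (hk : 0 < k) :
    locallyPeriodicPts M (g ^ k) = locallyPeriodicPts M g := by
  ext x
  simp only [mem_locallyPeriodicPts, ← pow_mul]
  constructor
  · rintro ⟨j, hj, hx⟩
    exact ⟨k * j, Nat.mul_pos hk hj, hx⟩
  · rintro ⟨j, hj, hx⟩
    refine ⟨j, hj, interior_mono ?_ hx⟩
    rw [mul_comm, pow_mul]
    exact fixedBy_subset_fixedBy_pow (g ^ j) k

variable [ContinuousConstSMul G M]

theorem smul_mem_interior_fixedBy_pow {x : M} (hx : x ∈ interior (fixedBy M (g ^ k))) :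
    g • x ∈ interior (fixedBy M (g ^ k)) := by
  have hfix : g • fixedBy M (g ^ k) = fixedBy M (g ^ k) := by
    rw [smul_fixedBy, (Commute.self_pow g k).eq, mul_inv_cancel_right]
  rw [← hfix, interior_smul]
  exact smul_mem_smul_set hx

theorem periodicOn_piecewise_smul_id {D N : Set M} [∀ x, Decidable (x ∈ D)] (hN : IsOpen N)
    (hgN : MapsTo (g • ·) N N) (hgD : MapsTo (g • ·) D D) (hD : D ⊆ fixedBy M (g ^ k))
    (hfrontier : ∀ y ∈ N ∩ frontier D, g • y = y) :
    PeriodicOn (D.piecewise (g • ·) id) k N where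
  isOpen := hN
  mapsTo y hy := by
    by_cases hyD : y ∈ D
    · rw [piecewise_eq_of_mem _ _ _ hyD]
      exact hgN hy
    · rwa [piecewise_eq_of_notMem _ _ _ hyD]
  continuousOn := ContinuousOn.piecewise hfrontier (continuous_const_smul g).continuousOn
    continuousOn_id
  isPeriodicPt y _ := by
    by_cases hyD : y ∈ D
    · have hiter := eqOn_iterate (piecewise_eqOn D (g • ·) id) hgD k hyD
      rw [IsPeriodicPt, IsFixedPt, hiter, smul_iterate]
      exact hD hyD
    · have hfix : IsFixedPt (D.piecewise (g • ·) id) y := piecewise_eq_of_notMem _ _ _ hyD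
      exact hfix.isPeriodicPt k

variable [T2Space M]

theorem isClosed_fixedBy (g : G) : IsClosed (fixedBy M g) :=
  isClosed_eq (continuous_const_smul g) continuous_id

variable (n : ℕ) [ChartedSpace (EuclideanSpace ℝ (Fin n)) M]
include n

theorem closure_interior_fixedBy_inter_locallyPeriodicPts_subset :
    closure (interior (fixedBy M g)) ∩ locallyPeriodicPts M g ⊆ interior (fixedBy M g) := by
  rintro x ⟨hcl, hx⟩
  obtain ⟨k, hk, hxk⟩ := mem_locallyPeriodicPts.mp hx
  have H : PeriodicOn (g • · : M → M) k (interior (fixedBy M (g ^ k))) :=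
    ⟨isOpen_interior, fun _ => smul_mem_interior_fixedBy_pow,
      (continuous_const_smul g).continuousOn, fun z hz => by
        rw [IsPeriodicPt, IsFixedPt, smul_iterate]
        exact interior_subset (s := fixedBy M (g ^ k)) hz⟩
  exact H.mem_interior_fixedPoints (n := n) hk hxk hcl

theorem subset_interior_fixedBy_of_isPreconnected {X : Set M} (hX : IsPreconnected X)
    (hXper : X ⊆ locallyPeriodicPts M g) (hne : (X ∩ interior (fixedBy M g)).Nonempty) :
    X ⊆ interior (fixedBy M g) :=
  hX.subset_of_closure_inter_subset isOpen_interior hne fun _ hx =>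
    closure_interior_fixedBy_inter_locallyPeriodicPts_subset n ⟨hx.1, hXper hx.2⟩

open scoped Classical in
/-- If the conclusion failed at some point, the map that acts by `g` on the interior of
`fixedBy M (g ^ j)` and by the identity elsewhere would be a periodic homeomorphism of `N` that
contradicts Newman's theorem near `z`. -/
theorem inter_interior_fixedBy_pow_subset_fixedBy {N : Set M} (hN : IsOpen N)
    (hNc : IsPreconnected N) (hgN : MapsTo (g • ·) N N)
    (hfix : N \ locallyPeriodicPts M g ⊆ fixedBy M g) {j : ℕ} (hj : 0 < j) {z : M} (hzN : z ∈ N)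
    (hz : z ∈ locallyPeriodicPts M g) (hzj : z ∉ interior (fixedBy M (g ^ j))) :
    N ∩ interior (fixedBy M (g ^ j)) ⊆ fixedBy M g := by
  let D := interior (fixedBy M (g ^ j))
  let f : M → M := D.piecewise (g • ·) id
  have hfD : EqOn f (g • ·) D := piecewise_eqOn D _ _
  have hfDc : EqOn f id Dᶜ := piecewise_eqOn_compl D _ _
  have hDper : closure D ∩ locallyPeriodicPts M g ⊆ D := by
    rw [← locallyPeriodicPts_pow hj]
    exact closure_interior_fixedBy_inter_locallyPeriodicPts_subset n
  have hfrontier : ∀ y ∈ N ∩ frontier D, g • y = y := fun y hy =>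
    hfix ⟨hy.1, fun hper =>
      (isOpen_interior.frontier_eq.subset hy.2).2 (hDper ⟨frontier_subset_closure hy.2, hper⟩)⟩
  have H : PeriodicOn f j N := periodicOn_piecewise_smul_id hN hgN
    (fun _ => smul_mem_interior_fixedBy_pow) interior_subset hfrontier
  have hzf : z ∈ interior (fixedPoints f) :=
    interior_maximal (fun _ hy => hfDc (notMem_subset subset_closure hy))
      isClosed_closure.isOpen_compl fun hzD => hzj (hDper ⟨hzD, hz⟩)
  intro y hy
  have hfy : f y = y := interior_subset (s := fixedPoints f)
    (H.subset_interior_fixedPoints (n := n) hj hNc ⟨z, hzN, hzf⟩ hy.1)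
  exact (hfD hy.2).symm.trans hfy

theorem exists_subset_fixedBy_pow {N : Set M} (hN : IsOpen N) (hNc : IsPreconnected N)
    (hgN : MapsTo (g • ·) N N) (hfix : N \ locallyPeriodicPts M g ⊆ fixedBy M g) :
    ∃ j > 0, N ⊆ fixedBy M (g ^ j) := by
  by_cases hall : N ⊆ fixedBy M g
  · exact ⟨1, one_pos, by rwa [pow_one]⟩
  obtain ⟨y, hyN, hyg⟩ := not_subset.mp hall
  have hyper : y ∈ locallyPeriodicPts M g := by_contra fun hy => hyg (hfix ⟨hyN, hy⟩)
  obtain ⟨j, hj, hyj⟩ := mem_locallyPeriodicPts.mp hyper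
  refine ⟨j, hj, fun z hz => ?_⟩
  by_contra hzj
  have hzper : z ∈ locallyPeriodicPts M g := by_contra fun hz' =>
    hzj (fixedBy_subset_fixedBy_pow g j (hfix ⟨hz, hz'⟩))
  exact hyg (inter_interior_fixedBy_pow_subset_fixedBy n hN hNc hgN hfix hj hz hzper
    (fun hzi => hzj (interior_subset hzi)) ⟨hyN, hyj⟩)

theorem locallyPeriodicPts_eq_univ [CompactSpace M] [T2Space (Quotient (orbitRel G M))]
    (hfin : ∀ x : M, (orbit G x).Finite) (g : G) : locallyPeriodicPts M g = univ := by
  have := ChartedSpace.locallyConnectedSpace (EuclideanSpace ℝ (Fin n)) M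
  by_contra hne
  have hcompact : CompactSpace ↥(locallyPeriodicPts M g)ᶜ :=
    isCompact_iff_compactSpace.mp isOpen_locallyPeriodicPts.isClosed_compl.isCompact
  have : Nonempty ↥(locallyPeriodicPts M g)ᶜ := (nonempty_compl.mpr hne).to_subtype
  obtain ⟨k, x, hx⟩ := nonempty_interior_of_iUnion_of_closed
    (f := fun k : {k // 0 < k} => ((↑) ⁻¹' fixedBy M (g ^ k.1) : Set ↥(locallyPeriodicPts M g)ᶜ))
    (fun k => (isClosed_fixedBy _).preimage continuous_subtype_val)
    (iUnion_eq_univ_iff.mpr fun x => by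
      obtain ⟨k, hk, -, hkx⟩ :=
        Subgroup.exists_pow_mem_of_index_ne_zero (index_stabilizer_ne_zero (hfin x)) g
      exact ⟨⟨k, hk⟩, hkx⟩)
  obtain ⟨S, hSfix, ⟨O, hO, rfl⟩, hxO⟩ := mem_interior.mp hx
  obtain ⟨N, hN, hxN, hNO, hNc, hgN⟩ :=
    exists_isPreconnected_forall_stabilizer_smul_mem (hfin x) hO hxO
  have hper := locallyPeriodicPts_pow (M := M) (g := g) k.2
  have hNfix : N \ locallyPeriodicPts M (g ^ k.1) ⊆ fixedBy M (g ^ k.1) := fun y hy =>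
    hSfix (a := ⟨y, hper ▸ hy.2⟩) (hNO hy.1)
  obtain ⟨j, hj, hNj⟩ := exists_subset_fixedBy_pow n hN hNc (hgN (g ^ k.1) (hSfix hxO)) hNfix
  refine x.2 (hper.subset ?_)
  exact mem_locallyPeriodicPts.mpr ⟨j, hj, interior_maximal hNj hN hxN⟩

theorem eq_one_of_nonempty_interior_fixedBy [CompactSpace M] [ConnectedSpace M] [FaithfulSMul G M]
    [T2Space (Quotient (orbitRel G M))] (hfin : ∀ x : M, (orbit G x).Finite)
    (hne : (interior (fixedBy M g)).Nonempty) : g = 1 := by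
  have huniv := subset_interior_fixedBy_of_isPreconnected n isPreconnected_univ
    (locallyPeriodicPts_eq_univ n hfin g).ge (by rwa [univ_inter])
  refine eq_of_smul_eq_smul fun x : M => ?_
  rw [one_smul]
  exact interior_subset (s := fixedBy M g) (huniv (mem_univ x))

theorem exists_stabilizer_eq_bot [Countable G] [CompactSpace M] [ConnectedSpace M]
    [FaithfulSMul G M] [T2Space (Quotient (orbitRel G M))] (hfin : ∀ x : M, (orbit G x).Finite) :
    ∃ x : M, stabilizer G x = ⊥ := by
  have hdense : Dense (⋂ g : {g : G // g ≠ 1}, (fixedBy M g.1)ᶜ) := by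
    refine dense_iInter_of_isOpen (fun g => (isClosed_fixedBy g.1).isOpen_compl) fun g => ?_
    rw [← interior_eq_empty_iff_dense_compl, ← not_nonempty_iff_eq_empty]
    exact mt (eq_one_of_nonempty_interior_fixedBy n hfin) g.2
  obtain ⟨x, hx⟩ := hdense.nonempty
  refine ⟨x, (Subgroup.eq_bot_iff_forall _).mpr fun g hg => ?_⟩
  by_contra hne
  exact mem_iInter.mp hx ⟨g, hne⟩ hg

end LocallyPeriodic

/-- A countable group acting effectively on a nonempty connected compact topological
`n`-manifold with Hausdorff orbit space is finite. -/
theorem stmt13 {G M : Type*} (n : ℕ) [Group G] [Countable G]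
    [TopologicalSpace M] [Nonempty M] [ConnectedSpace M] [CompactSpace M] [T2Space M]
    [ChartedSpace (EuclideanSpace ℝ (Fin n)) M]
    [MulAction G M] [FaithfulSMul G M] [ContinuousConstSMul G M]
    [T2Space (Quotient (MulAction.orbitRel G M))] :
    Finite G := by
  have hfin (x : M) : (MulAction.orbit G x).Finite := finite_orbit_of_t2Space_quotient x
  obtain ⟨x, hx⟩ := exists_stabilizer_eq_bot n hfin
  have hindex : (MulAction.stabilizer G x).index ≠ 0 := index_stabilizer_ne_zero (hfin x)
  rw [hx, Subgroup.index_bot] at hindex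
  exact Nat.finite_of_card_ne_zero hindex
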